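/- Suppose Assumptions (K) and (A_p) hold and let ε₀ = R/(8M). For every positive integer n and every ε > 0 with (n+1)ε ≤ ε₀, the defect δ^[n] of the stroboscopic averaging iteration is p times continuously differentiable with respect to θ and satisfies ‖δ^[n]‖_{R,p} ≤ 2M·(2·𝒬_p·(n+1)·ε/ε₀)^n, where 𝒬_p = 5 + 2^{p+1} e^{5/2} p!. -/

import Mathlib

open Set

/-- The set `K_ρ = {u + ũ : u ∈ closure K, ‖ũ‖ ≤ ρ}` inside the complexification `Xc` of `X`. -/
def Kset {X Xc : Type*} [NormedAddCommGroup X] [NormedSpace ℝ X]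
    [NormedAddCommGroup Xc] [NormedSpace ℂ Xc]
    (ι : X →ₗᵢ[ℝ] Xc) (K : Set X) (ρ : ℝ) : Set Xc :=
  {z | ∃ u ∈ closure K, ∃ w : Xc, ‖w‖ ≤ ρ ∧ z = ι u + w}

/-- θ-average `⟨g⟩(u) = ∫₀¹ g_θ(u) dθ` of a 1-periodic map. -/
noncomputable def thAvg {Xc : Type*} [NormedAddCommGroup Xc] [NormedSpace ℂ Xc]
    (g : ℝ → Xc → Xc) (u : Xc) : Xc :=
  ∫ θ in (0:ℝ)..1, g θ u

/-- Averaged vector field `F(u) = (∂_u⟨φ⟩(u))⁻¹ ⟨f∘φ⟩(u)`. -/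
noncomputable def aveField {Xc : Type*} [NormedAddCommGroup Xc] [NormedSpace ℂ Xc]
    (f φ : ℝ → Xc → Xc) (u : Xc) : Xc :=
  (fderiv ℂ (thAvg φ) u).inverse (thAvg (fun θ v => f θ (φ θ v)) u)

/-- The stroboscopic averaging iteration: `Φ^[0] = id` and
`Φ^[k+1]_θ(u) = u + ε ∫₀^θ ( f_τ(Φ^[k]_τ(u)) − ∂_uΦ^[k]_τ(u) F^[k](u) ) dτ`. -/
noncomputable def PhiIter {Xc : Type*} [NormedAddCommGroup Xc] [NormedSpace ℂ Xc]
    (f : ℝ → Xc → Xc) (ε : ℝ) : ℕ → ℝ → Xc → Xc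
  | 0 => fun _ u => u
  | k+1 => fun θ u => u + ε • ∫ τ in (0:ℝ)..θ,
      (f τ (PhiIter f ε k τ u) -
        fderiv ℂ (PhiIter f ε k τ) u (aveField f (PhiIter f ε k) u))

/-- The defect `δ^[k]_θ(u) = (1/ε)∂_θΦ^[k]_θ(u) + ∂_uΦ^[k]_θ(u) F^[k](u) − f_θ(Φ^[k]_θ(u))`. -/
noncomputable def defect {Xc : Type*} [NormedAddCommGroup Xc] [NormedSpace ℂ Xc]
    (f : ℝ → Xc → Xc) (ε : ℝ) (k : ℕ) (θ : ℝ) (u : Xc) : Xc :=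
  (1/ε) • deriv (fun τ => PhiIter f ε k τ u) θ
    + fderiv ℂ (PhiIter f ε k θ) u (aveField f (PhiIter f ε k) u)
    - f θ (PhiIter f ε k θ u)

/-!
Differentiating the recursion `p` times in `θ` would call for Faà di Bruno expansions. Instead,
`f θ` is replaced by its Taylor polynomial `∑ sʲ/j! ∂_θʲ f θ` of degree `p` in a complex variable
`s`, `|s| < 1/2`, which is bounded by a multiple of `M` because of the bounds on the
`θ`-derivatives. The iterates lift accordingly to maps holomorphic in `(s, u)` whose `s`-derivatives
of order at most `p` at `s = 0` are the `θ`-derivatives of the iterates. Cauchy estimates in `u`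
show that one averaging step on a ball smaller by `r = R/(n+1)` contracts differences, of the
iterates and of their lifts, by the factor `16εM/r`. Since `∂_θ Φ^[k+1]` is `ε` times the residual
`f ∘ Φ^[k] - ∂_u Φ^[k] F^[k]`, the defect `δ^[k+1]` is the difference of the residuals of `Φ^[k]`
and `Φ^[k+1]`, hence of order `(16εM/r)^(k+1)`, and Cauchy estimates in `s` bound its
`θ`-derivatives.
-/

namespace StroboscopicAveraging

open Metric Filter Topology

universe u

/-! ### Holomorphic maps between Banach spaces -/

theorem ball_subset_ball_add {α : Type*} [PseudoMetricSpace α] {c z : α} {a r : ℝ}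
    (hz : z ∈ closedBall c a) : ball z r ⊆ ball c (a + r) :=
  ball_subset_ball' (by linarith [mem_closedBall.1 hz])

theorem exists_ball_subset_forall_norm_le {α F : Type*} [PseudoMetricSpace α]
    [SeminormedAddCommGroup F] {g : α → F} {V : Set α} {x : α} (hV : IsOpen V)
    (hg : ContinuousOn g V) (hx : x ∈ V) :
    ∃ r > 0, ∃ C, ball x (4 * r) ⊆ V ∧ ∀ z ∈ ball x (4 * r), ‖g z‖ ≤ C := by
  have hev : ∀ᶠ z in 𝓝 x, ‖g z‖ < ‖g x‖ + 1 :=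
    (hg.continuousAt (hV.mem_nhds hx)).norm.eventually_lt_const (lt_add_one _)
  obtain ⟨ρ, hρ, hball⟩ := Metric.mem_nhds_iff.1 (inter_mem hev (hV.mem_nhds hx))
  rw [← mul_div_cancel₀ ρ (four_ne_zero (α := ℝ))] at hball
  exact ⟨ρ / 4, by positivity, ‖g x‖ + 1, fun z hz => (hball hz).2, fun z hz => (hball hz).1.le⟩

section Holomorphic

variable {E F : Type*} [NormedAddCommGroup E] [NormedSpace ℂ E]
  [NormedAddCommGroup F] [NormedSpace ℂ F] [CompleteSpace F]

theorem norm_iteratedDeriv_le_of_norm_le_ball {g : ℂ → F} {c : ℂ} {r C : ℝ} (n : ℕ) (hr : 0 < r)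
    (hg : DifferentiableOn ℂ g (ball c r)) (hC : ∀ z ∈ ball c r, ‖g z‖ ≤ C) :
    ‖iteratedDeriv n g c‖ ≤ n.factorial * C / r ^ n := by
  have bound_of_lt : ∀ ρ ∈ Ioo 0 r, ‖iteratedDeriv n g c‖ ≤ n.factorial * C / ρ ^ n := by
    intro ρ hρ
    have hsub : closedBall c ρ ⊆ ball c r := closedBall_subset_ball hρ.2
    refine Complex.norm_iteratedDeriv_le_of_forall_mem_sphere_norm_le n hρ.1
      (DifferentiableOn.diffContOnCl ?_) fun z hz => hC z (hsub (sphere_subset_closedBall hz))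
    rw [closure_ball _ hρ.1.ne']
    exact hg.mono hsub
  have hlim : Tendsto (fun ρ : ℝ => n.factorial * C / ρ ^ n) (𝓝[<] r)
      (𝓝 (n.factorial * C / r ^ n)) :=
    ContinuousAt.continuousWithinAt (by fun_prop (disch := positivity))
  exact ge_of_tendsto hlim (by filter_upwards [Ioo_mem_nhdsLT hr] using bound_of_lt)

theorem norm_fderiv_le_of_norm_le_ball {g : E → F} {x : E} {r C : ℝ} (hr : 0 < r)
    (hg : DifferentiableOn ℂ g (ball x r)) (hC : ∀ z ∈ ball x r, ‖g z‖ ≤ C) :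
    ‖fderiv ℂ g x‖ ≤ C / r := by
  have hC0 : 0 ≤ C := (norm_nonneg _).trans (hC x (mem_ball_self hr))
  refine ContinuousLinearMap.opNorm_le_bound _ (by positivity) fun v => ?_
  rcases eq_or_ne v 0 with rfl | hv
  · simp
  have hv : 0 < ‖v‖ := norm_pos_iff.2 hv
  have hline : HasDerivAt (fun t : ℂ => g (x + t • v)) (fderiv ℂ g x v) 0 := by
    have hgx := (hg.differentiableAt (ball_mem_nhds x hr)).hasFDerivAt
    refine HasFDerivAt.comp_hasDerivAt (l := g) 0 (by simpa using hgx) ?_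
    simpa using ((hasDerivAt_id (0 : ℂ)).smul_const v).const_add x
  have hmaps : MapsTo (fun t : ℂ => x + t • v) (ball 0 (r / ‖v‖)) (ball x r) := by
    intro t ht
    rw [mem_ball_zero_iff, lt_div_iff₀ hv] at ht
    rwa [mem_ball_iff_norm, add_sub_cancel_left, norm_smul]
  have hderiv := norm_iteratedDeriv_le_of_norm_le_ball 1 (div_pos hr hv)
    (hg.comp (by fun_prop) hmaps) fun t ht => hC _ (hmaps ht)
  calc ‖fderiv ℂ g x v‖ = ‖iteratedDeriv 1 (fun t : ℂ => g (x + t • v)) 0‖ := by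
        rw [iteratedDeriv_one, hline.deriv]
    _ ≤ Nat.factorial 1 * C / (r / ‖v‖) ^ 1 := hderiv
    _ = C / r * ‖v‖ := by simp; field_simp

theorem norm_fderiv_sub_fderiv_le_of_norm_sub_le {g₁ g₂ : E → F} {x : E} {r C : ℝ} (hr : 0 < r)
    (h₁ : DifferentiableOn ℂ g₁ (ball x r)) (h₂ : DifferentiableOn ℂ g₂ (ball x r))
    (hC : ∀ z ∈ ball x r, ‖g₁ z - g₂ z‖ ≤ C) :
    ‖fderiv ℂ g₁ x - fderiv ℂ g₂ x‖ ≤ C / r := by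
  rw [← fderiv_fun_sub (h₁.differentiableAt (ball_mem_nhds x hr))
    (h₂.differentiableAt (ball_mem_nhds x hr))]
  exact norm_fderiv_le_of_norm_le_ball hr (h₁.sub h₂) hC

theorem norm_sub_le_of_norm_le_ball {g : E → F} {c x y : E} {a r C : ℝ} (hr : 0 < r)
    (hg : DifferentiableOn ℂ g (ball c (a + r))) (hC : ∀ z ∈ ball c (a + r), ‖g z‖ ≤ C)
    (hx : x ∈ closedBall c a) (hy : y ∈ closedBall c a) :
    ‖g y - g x‖ ≤ C / r * ‖y - x‖ := by
  refine (convex_closedBall c a).norm_image_sub_le_of_norm_fderiv_le (𝕜 := ℂ)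
    (fun z hz => ?_) (fun z hz => ?_) hx hy
  · exact (hg.mono (ball_subset_ball_add hz)).differentiableAt (ball_mem_nhds z hr)
  · exact norm_fderiv_le_of_norm_le_ball hr (hg.mono (ball_subset_ball_add hz))
      fun w hw => hC w (ball_subset_ball_add hz hw)

theorem norm_fderiv_sub_fderiv_le {g : E → F} {x y : E} {r C : ℝ} (hr : 0 < r)
    (hg : DifferentiableOn ℂ g (ball x (3 * r))) (hC : ∀ z ∈ ball x (3 * r), ‖g z‖ ≤ C)
    (hy : y ∈ ball x r) :
    ‖fderiv ℂ g y - fderiv ℂ g x‖ ≤ C / r / r * ‖y - x‖ := by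
  have three_mul_eq : 3 * r = 2 * r + r := by ring
  have hyr := mem_ball_iff_norm.1 hy
  have hshift : MapsTo (fun z => z + (y - x)) (ball x r) (ball x (2 * r)) := by
    intro z hz
    rw [mem_ball_iff_norm] at hz ⊢
    calc ‖z + (y - x) - x‖ = ‖(z - x) + (y - x)‖ := by congr 1; abel
      _ ≤ ‖z - x‖ + ‖y - x‖ := norm_add_le _ _
      _ < 2 * r := by linarith
  have hfderiv : fderiv ℂ (fun z => g (z + (y - x))) x = fderiv ℂ g y := by
    rw [fderiv_comp_add_right, add_sub_cancel]
  rw [← hfderiv, div_mul_eq_mul_div]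
  refine norm_fderiv_sub_fderiv_le_of_norm_sub_le hr
    (hg.comp (by fun_prop) fun z hz => ball_subset_ball (by linarith) (hshift hz))
    (hg.mono (ball_subset_ball (by linarith))) fun z hz => ?_
  rw [three_mul_eq] at hg hC
  simpa using norm_sub_le_of_norm_le_ball hr hg hC
    (ball_subset_closedBall (ball_subset_ball (by linarith) hz))
    (ball_subset_closedBall (hshift hz))

theorem norm_sub_sub_fderiv_le {g : E → F} {x y : E} {r C : ℝ} (hr : 0 < r)
    (hg : DifferentiableOn ℂ g (ball x (3 * r))) (hC : ∀ z ∈ ball x (3 * r), ‖g z‖ ≤ C)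
    (hy : y ∈ ball x r) :
    ‖g y - g x - fderiv ℂ g x (y - x)‖ ≤ C / r / r * ‖y - x‖ * ‖y - x‖ := by
  have hC0 : 0 ≤ C := (norm_nonneg _).trans (hC x (mem_ball_self (by positivity)))
  have hsub : closedBall x ‖y - x‖ ⊆ ball x r := closedBall_subset_ball (mem_ball_iff_norm.1 hy)
  refine (convex_closedBall x ‖y - x‖).norm_image_sub_le_of_norm_fderiv_le' (𝕜 := ℂ)
    (fun z hz => ?_) (fun z hz => ?_) (by simp) (by rw [mem_closedBall_iff_norm])
  · exact hg.differentiableAt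
      (isOpen_ball.mem_nhds (ball_subset_ball (by linarith) (hsub hz)))
  · refine (norm_fderiv_sub_fderiv_le hr hg hC (hsub hz)).trans ?_
    gcongr
    exact mem_closedBall_iff_norm.1 hz

theorem differentiableAt_of_tendstoUniformlyOn {α : Type*} {l : Filter α} [l.NeBot]
    {g : α → E → F} {g₀ : E → F} {x : E} {r : ℝ} (hr : 0 < r)
    (hg : ∀ᶠ n in l, DifferentiableOn ℂ (g n) (ball x r))
    (hlim : TendstoUniformlyOn g g₀ l (ball x r)) : DifferentiableAt ℂ g₀ x := by
  have hball : ∀ y ∈ ball x (r / 2), ball y (r / 2) ⊆ ball x r := fun y hy => by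
    simpa only [add_halves] using ball_subset_ball_add (r := r / 2) (ball_subset_closedBall hy)
  have hcauchy : UniformCauchySeqOn (fun n => fderiv ℂ (g n)) l (ball x (r / 2)) := by
    intro s hs
    obtain ⟨e, he, hes⟩ := mem_uniformity_dist.1 hs
    have he4 : 0 < e * r / 4 := by positivity
    filter_upwards [hlim.uniformCauchySeqOn _ (dist_mem_uniformity he4), hg.prod_mk hg]
      with m hm hgm y hy
    refine hes ?_
    calc dist (fderiv ℂ (g m.1) y) (fderiv ℂ (g m.2) y) ≤ e * r / 4 / (r / 2) := by
          rw [dist_eq_norm]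
          exact norm_fderiv_sub_fderiv_le_of_norm_sub_le (half_pos hr) (hgm.1.mono (hball y hy))
            (hgm.2.mono (hball y hy)) fun z hz =>
              (dist_eq_norm (g m.1 z) _).symm.trans_le (hm z (hball y hy hz)).le
      _ < e := by field_simp; norm_num
  have hpointwise : ∀ y ∈ ball x (r / 2), ∃ A, Tendsto (fun n => fderiv ℂ (g n) y) l (𝓝 A) :=
    fun y hy => cauchy_map_iff_exists_tendsto.1 (hcauchy.cauchy_map hy)
  choose! A hA using hpointwise
  have hxball : ball x (r / 2) ∈ 𝓝 x := ball_mem_nhds x (half_pos hr)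
  refine (hasFDerivAt_of_tendstoUniformlyOnFilter (f := g) (g' := A) (l := l)
    ((hcauchy.tendstoUniformlyOn_of_tendsto hA).tendstoUniformlyOnFilter.mono_right
      (le_principal_iff.2 hxball)) ?_ ?_).differentiableAt
  · filter_upwards [hg.prod_mk hxball] with n hn
    exact ((hn.1.mono (hball _ hn.2)).differentiableAt
      (ball_mem_nhds _ (half_pos hr))).hasFDerivAt
  · filter_upwards [hxball] with y hy
    exact hlim.tendsto_at (hball y hy (mem_ball_self (half_pos hr)))

theorem differentiableOn_fderiv_apply {g : E → F} {V : Set E} (hV : IsOpen V)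
    (hg : DifferentiableOn ℂ g V) (v : E) : DifferentiableOn ℂ (fun y => fderiv ℂ g y v) V := by
  intro x hx
  obtain ⟨r, hr, C, hsub, hC⟩ := exists_ball_subset_forall_norm_le hV hg.continuousOn hx
  have hball : ∀ y ∈ ball x r, ball y (3 * r) ⊆ ball x (4 * r) := fun y hy => by
    convert ball_subset_ball_add (r := 3 * r) (ball_subset_closedBall hy) using 2; ring
  have hsmall : ∀ᶠ t : ℂ in 𝓝[≠] 0, ∀ y, y + t • v ∈ ball y r := by
    have : ∀ᶠ t : ℂ in 𝓝 0, ‖t • v‖ < r :=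
      (Continuous.tendsto' (by fun_prop) 0 0 (by simp)).eventually_lt_const hr
    filter_upwards [nhdsWithin_le_nhds this] with t ht y
    rwa [mem_ball_iff_norm, add_sub_cancel_left]
  refine (differentiableAt_of_tendstoUniformlyOn (l := 𝓝[≠] (0 : ℂ))
    (g := fun t y => t⁻¹ • (g (y + t • v) - g y)) hr ?_ ?_).differentiableWithinAt
  · filter_upwards [hsmall] with t ht
    refine ((hg.comp (by fun_prop) fun y hy => hsub (hball y hy ?_)).sub
      (hg.mono fun y hy => hsub (hball y hy ?_))).const_smul _
    · exact ball_subset_ball (by linarith) (ht y)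
    · exact mem_ball_self (by positivity)
  · have hbound : ∀ᶠ t : ℂ in 𝓝[≠] 0, ∀ y ∈ ball x r,
        ‖fderiv ℂ g y v - t⁻¹ • (g (y + t • v) - g y)‖ ≤ C / r / r * ‖v‖ * ‖v‖ * ‖t‖ := by
      filter_upwards [hsmall, self_mem_nhdsWithin] with t ht ht0 y hy
      have htaylor := norm_sub_sub_fderiv_le hr (hg.mono ((hball y hy).trans hsub))
        (fun z hz => hC z (hball y hy hz)) (ht y)
      rw [add_sub_cancel_left] at htaylor
      calc _ = ‖t⁻¹ • (g (y + t • v) - g y - fderiv ℂ g y (t • v))‖ := by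
            rw [norm_sub_rev, map_smul, smul_sub _ (g (y + t • v) - g y), inv_smul_smul₀ ht0]
        _ ≤ ‖t‖⁻¹ * (C / r / r * ‖t • v‖ * ‖t • v‖) := by
            rw [norm_smul, norm_inv]; gcongr
        _ = _ := by
            have : ‖t‖ ≠ 0 := norm_ne_zero_iff.2 ht0
            rw [norm_smul]; field_simp
    have hzero : Tendsto (fun t : ℂ => C / r / r * ‖v‖ * ‖v‖ * ‖t‖) (𝓝[≠] 0) (𝓝 0) :=
      tendsto_nhdsWithin_of_tendsto_nhds (Continuous.tendsto' (by fun_prop) _ _ (by simp))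
    refine Metric.tendstoUniformlyOn_iff.2 fun e he => ?_
    filter_upwards [hbound, hzero.eventually_lt_const he] with t ht hte y hy
    rw [dist_eq_norm]
    exact (ht y hy).trans_lt hte

/-- Holomorphy of an operator-valued map in the weak sense implies holomorphy in operator norm:
the Taylor estimate in direction `v` carries a factor `‖v‖`. -/
theorem differentiableAt_clm_of_apply {X : Type*} [NormedAddCommGroup X] [NormedSpace ℂ X]
    {A : E → X →L[ℂ] F} {x : E} {r C : ℝ} (hr : 0 < r)
    (hA : ∀ v, DifferentiableOn ℂ (fun y => A y v) (ball x (3 * r)))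
    (hC : ∀ z ∈ ball x (3 * r), ‖A z‖ ≤ C) : DifferentiableAt ℂ A x := by
  have hAv : ∀ v, ∀ z ∈ ball x (3 * r), ‖A z v‖ ≤ C * ‖v‖ := fun v z hz =>
    (A z).le_of_opNorm_le (hC z hz) v
  have hAx : ∀ v, DifferentiableAt ℂ (fun y => A y v) x := fun v =>
    (hA v).differentiableAt (ball_mem_nhds x (by positivity))
  let B : X →L[ℂ] E →L[ℂ] F := LinearMap.mkContinuous
    { toFun := fun v => fderiv ℂ (fun y => A y v) x
      map_add' := fun v w => by simpa only [map_add] using fderiv_fun_add (hAx v) (hAx w)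
      map_smul' := fun a v => by
        simpa only [map_smul, RingHom.id_apply] using fderiv_fun_const_smul (hAx v) a }
    (C / (3 * r)) fun v => by
      refine (norm_fderiv_le_of_norm_le_ball (by positivity) (hA v) (hAv v)).trans_eq ?_
      ring
  have htaylor : ∀ y ∈ ball x r,
      ‖A y - A x - B.flip (y - x)‖ ≤ C / r / r * (‖y - x‖ * ‖y - x‖) := by
    intro y hy
    have hC0 : 0 ≤ C := (norm_nonneg _).trans (hC x (mem_ball_self (by positivity)))
    refine ContinuousLinearMap.opNorm_le_bound _ (by positivity) fun v => ?_
    refine (norm_sub_sub_fderiv_le hr (hA v) (hAv v) hy).trans_eq ?_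
    ring
  refine HasFDerivAt.differentiableAt (f' := B.flip) (.of_isLittleO ?_)
  refine (Asymptotics.IsBigO.of_bound (g := fun y => ‖y - x‖ ^ 2) (C / r / r) ?_).trans_isLittleO
    ?_
  · filter_upwards [ball_mem_nhds x hr] with y hy
    simpa only [norm_pow, norm_norm, ← pow_two] using htaylor y hy
  · exact Asymptotics.isLittleO_norm_pow_id one_lt_two |>.comp_tendsto
      (tendsto_sub_nhds_zero_iff.2 tendsto_id)

theorem differentiableOn_fderiv {g : E → F} {V : Set E} (hV : IsOpen V)
    (hg : DifferentiableOn ℂ g V) : DifferentiableOn ℂ (fderiv ℂ g) V := by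
  intro x hx
  obtain ⟨r, hr, C, hsub, hC⟩ := exists_ball_subset_forall_norm_le hV hg.continuousOn hx
  have hball : ∀ y ∈ ball x (3 * r), ball y r ⊆ ball x (4 * r) := fun y hy => by
    convert ball_subset_ball_add (r := r) (ball_subset_closedBall hy) using 2; ring
  refine (differentiableAt_clm_of_apply hr (C := C / r) (fun v => ?_) fun y hy =>
    norm_fderiv_le_of_norm_le_ball hr (hg.mono ((hball y hy).trans hsub)) fun z hz =>
      hC z (hball y hy hz)).differentiableWithinAt
  exact (differentiableOn_fderiv_apply hV hg v).mono
    ((ball_subset_ball (by linarith)).trans hsub)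

end Holomorphic

/-! ### Holomorphic families depending on a parameter -/

/-- A family of maps that is jointly continuous on `I × V` and holomorphic on `V` for every value
of the parameter in `I`. -/
structure HolomorphicFamilyOn {T E F : Type*} [TopologicalSpace T] [NormedAddCommGroup E]
    [NormedSpace ℂ E] [NormedAddCommGroup F] [NormedSpace ℂ F] (I : Set T) (V : Set E)
    (g : T → E → F) : Prop where
  continuousOn : ContinuousOn (Function.uncurry g) (I ×ˢ V)
  differentiableOn : ∀ t ∈ I, DifferentiableOn ℂ (g t) V

/-- `g'` is the derivative of the family `g` with respect to its (real or complex) parameter, at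
every point of `I × V`. -/
def HasParamDerivOn {𝕜 E F : Type*} [NontriviallyNormedField 𝕜] [NormedAddCommGroup F]
    [NormedSpace 𝕜 F] (I : Set 𝕜) (V : Set E) (g g' : 𝕜 → E → F) : Prop :=
  ∀ t ∈ I, ∀ u ∈ V, HasDerivAt (fun τ => g τ u) (g' t u) t

theorem HasParamDerivOn.clm_apply {𝕜 E F G : Type*} [RCLike 𝕜] [NormedAlgebra 𝕜 ℂ]
    [NormedAddCommGroup F] [NormedSpace ℂ F] [NormedSpace 𝕜 F] [IsScalarTower 𝕜 ℂ F]
    [NormedAddCommGroup G] [NormedSpace ℂ G] [NormedSpace 𝕜 G] [IsScalarTower 𝕜 ℂ G]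
    {I : Set 𝕜} {V : Set E} {a a' : 𝕜 → E → F →L[ℂ] G} {b b' : 𝕜 → E → F}
    (ha : HasParamDerivOn I V a a') (hb : HasParamDerivOn I V b b') :
    HasParamDerivOn I V (fun t u => a t u (b t u)) fun t u => a' t u (b t u) + a t u (b' t u) :=
  fun t ht u hu =>
    ((ContinuousLinearMap.restrictScalarsL ℂ F G 𝕜 𝕜).hasFDerivAt.comp_hasDerivAt t
      (ha t ht u hu)).clm_apply (hb t ht u hu)

namespace HolomorphicFamilyOn

section Operations

variable {T E F G : Type*} [TopologicalSpace T] [NormedAddCommGroup E] [NormedSpace ℂ E]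
  [NormedAddCommGroup F] [NormedSpace ℂ F] [NormedAddCommGroup G] [NormedSpace ℂ G]
  {I : Set T} {V : Set E}

theorem mono {V' : Set E} {g : T → E → F} (h : HolomorphicFamilyOn I V g) (hV : V' ⊆ V) :
    HolomorphicFamilyOn I V' g :=
  ⟨h.continuousOn.mono (prod_mono_right hV), fun t ht => (h.differentiableOn t ht).mono hV⟩

theorem const {g : E → F} (hg : DifferentiableOn ℂ g V) :
    HolomorphicFamilyOn I V fun _ : T => g :=
  ⟨hg.continuousOn.comp continuousOn_snd fun _ hx => hx.2, fun _ _ => hg⟩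

theorem add {g₁ g₂ : T → E → F} (h₁ : HolomorphicFamilyOn I V g₁)
    (h₂ : HolomorphicFamilyOn I V g₂) : HolomorphicFamilyOn I V fun t u => g₁ t u + g₂ t u :=
  ⟨h₁.continuousOn.add h₂.continuousOn,
    fun t ht => (h₁.differentiableOn t ht).add (h₂.differentiableOn t ht)⟩

theorem clm_apply {a : T → E → F →L[ℂ] G} {b : T → E → F} (ha : HolomorphicFamilyOn I V a)
    (hb : HolomorphicFamilyOn I V b) : HolomorphicFamilyOn I V fun t u => a t u (b t u) :=
  ⟨ha.continuousOn.clm_apply hb.continuousOn,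
    fun t ht => (ha.differentiableOn t ht).clm_apply (hb.differentiableOn t ht)⟩

theorem comp {W : Set F} {f : T → F → G} {φ : T → E → F} (hf : HolomorphicFamilyOn I W f)
    (hφ : HolomorphicFamilyOn I V φ) (hmaps : ∀ t ∈ I, MapsTo (φ t) V W) :
    HolomorphicFamilyOn I V fun t u => f t (φ t u) :=
  ⟨hf.continuousOn.comp (continuousOn_fst.prodMk hφ.continuousOn)
      fun x hx => ⟨hx.1, hmaps x.1 hx.1 hx.2⟩,
    fun t ht => (hf.differentiableOn t ht).comp (hφ.differentiableOn t ht) (hmaps t ht)⟩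

theorem comp_param {S : Type*} [TopologicalSpace S] {J : Set S} {g : T → E → F} {σ : S → T}
    (h : HolomorphicFamilyOn I V g) (hσ : ContinuousOn σ J) (hmaps : MapsTo σ J I) :
    HolomorphicFamilyOn J V fun t => g (σ t) :=
  ⟨h.continuousOn.comp ((hσ.comp continuousOn_fst fun _ hx => hx.1).prodMk continuousOn_snd)
      fun _ hx => ⟨hmaps hx.1, hx.2⟩,
    fun t ht => h.differentiableOn (σ t) (hmaps ht)⟩

theorem mono_param {J : Set T} {g : T → E → F} (h : HolomorphicFamilyOn I V g) (hJ : J ⊆ I) :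
    HolomorphicFamilyOn J V g :=
  h.comp_param continuousOn_id hJ

theorem continuousOn_apply {g : T → E → F} (h : HolomorphicFamilyOn I V g) {u : E}
    (hu : u ∈ V) : ContinuousOn (fun t => g t u) I :=
  h.continuousOn.comp (f := fun t => (t, u)) (by fun_prop) fun _ ht => ⟨ht, hu⟩

theorem continuous_apply {g : T → E → F} (h : HolomorphicFamilyOn univ V g) {u : E}
    (hu : u ∈ V) : Continuous fun t => g t u :=
  continuousOn_univ.1 (h.continuousOn_apply hu)

end Operations

theorem exists_ball_prod_norm_le {E F : Type*} [NormedAddCommGroup E] [NormedSpace ℂ E]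
    [NormedAddCommGroup F] [NormedSpace ℂ F] {T : Type*} [PseudoMetricSpace T] {I : Set T}
    {V : Set E} {g : T → E → F} (hI : IsOpen I) (hV : IsOpen V) (h : HolomorphicFamilyOn I V g)
    {t : T} {x : E} (ht : t ∈ I) (hx : x ∈ V) :
    ∃ r > 0, ∃ C, ball t r ⊆ I ∧ ball x r ⊆ V ∧ ∀ τ ∈ ball t r, ∀ z ∈ ball x r, ‖g τ z‖ ≤ C := by
  obtain ⟨r, hr, C, hsub, hC⟩ :=
    exists_ball_subset_forall_norm_le (hI.prod hV) h.continuousOn (mk_mem_prod ht hx)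
  have hr4 : 0 < 4 * r := by positivity
  rw [← ball_prod_same] at hsub hC
  exact ⟨4 * r, hr4, C, fun τ hτ => (hsub (mk_mem_prod hτ (mem_ball_self hr4))).1,
    fun z hz => (hsub (mk_mem_prod (mem_ball_self hr4) hz)).2,
    fun τ hτ z hz => hC _ (mk_mem_prod hτ hz)⟩

end HolomorphicFamilyOn

section MeanValue

variable {𝕜 F : Type*} [RCLike 𝕜] [NormedAddCommGroup F] [NormedSpace 𝕜 F]
  {g g' g'' : 𝕜 → F} {t₀ t : 𝕜} {r C : ℝ}

theorem norm_sub_le_of_hasDerivAt_ball (hg : ∀ τ ∈ ball t₀ r, HasDerivAt g (g' τ) τ)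
    (hC : ∀ τ ∈ ball t₀ r, ‖g' τ‖ ≤ C) (ht : t ∈ ball t₀ r) : ‖g t - g t₀‖ ≤ C * ‖t - t₀‖ :=
  (convex_ball t₀ r).norm_image_sub_le_of_norm_hasDerivWithin_le
    (fun τ hτ => (hg τ hτ).hasDerivWithinAt) hC (mem_ball_self (pos_of_mem_ball ht)) ht

theorem norm_sub_sub_smul_le_of_hasDerivAt_ball (hg : ∀ τ ∈ ball t₀ r, HasDerivAt g (g' τ) τ)
    (hg' : ∀ τ ∈ ball t₀ r, HasDerivAt g' (g'' τ) τ) (hC : ∀ τ ∈ ball t₀ r, ‖g'' τ‖ ≤ C)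
    (ht : t ∈ ball t₀ r) :
    ‖g t - g t₀ - (t - t₀) • g' t₀‖ ≤ C * ‖t - t₀‖ * ‖t - t₀‖ := by
  have hsub : closedBall t₀ ‖t - t₀‖ ⊆ ball t₀ r :=
    closedBall_subset_ball (mem_ball_iff_norm.1 ht)
  have hC0 : 0 ≤ C := (norm_nonneg _).trans (hC t ht)
  have hderiv : ∀ τ ∈ closedBall t₀ ‖t - t₀‖,
      HasDerivWithinAt (fun τ => g τ - τ • g' t₀) (g' τ - g' t₀) (closedBall t₀ ‖t - t₀‖) τ := by
    intro τ hτ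
    simpa only [one_smul, id] using
      ((hg τ (hsub hτ)).fun_sub ((hasDerivAt_id τ).smul_const (g' t₀))).hasDerivWithinAt
  have hbound : ∀ τ ∈ closedBall t₀ ‖t - t₀‖, ‖g' τ - g' t₀‖ ≤ C * ‖t - t₀‖ := by
    intro τ hτ
    refine (norm_sub_le_of_hasDerivAt_ball hg' hC (hsub hτ)).trans ?_
    gcongr
    exact mem_closedBall_iff_norm.1 hτ
  have hmean := (convex_closedBall t₀ ‖t - t₀‖).norm_image_sub_le_of_norm_hasDerivWithin_le hderiv
    hbound (mem_closedBall_self (norm_nonneg _)) (mem_closedBall_iff_norm.2 le_rfl)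
  rwa [sub_sub_sub_comm, ← sub_smul] at hmean

end MeanValue

namespace HolomorphicFamilyOn

section SpaceDerivative

variable {𝕜 E F : Type*} [RCLike 𝕜] [NormedAddCommGroup E] [NormedSpace ℂ E]
  [NormedAddCommGroup F] [NormedSpace ℂ F] [CompleteSpace F] [NormedSpace 𝕜 F]
  {I : Set 𝕜} {V : Set E} {g g' g'' : 𝕜 → E → F}

protected theorem fderiv (hI : IsOpen I) (hV : IsOpen V) (h : HolomorphicFamilyOn I V g)
    (h' : HolomorphicFamilyOn I V g') (hd : HasParamDerivOn I V g g') :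
    HolomorphicFamilyOn I V fun t u => fderiv ℂ (g t) u := by
  refine ⟨?_, fun t ht => differentiableOn_fderiv hV (h.differentiableOn t ht)⟩
  rintro ⟨t, x⟩ ⟨ht, hx⟩
  obtain ⟨r, hr, C, hsubI, hsubV, hC⟩ := h'.exists_ball_prod_norm_le hI hV ht hx
  have hr2 : 0 < r / 2 := half_pos hr
  have hvary : ∀ᶠ z in 𝓝 (t, x),
      ‖fderiv ℂ (g z.1) z.2 - fderiv ℂ (g t) z.2‖ ≤ C * ‖z.1 - t‖ / (r / 2) := by
    filter_upwards [prod_mem_nhds (ball_mem_nhds t hr) (ball_mem_nhds x hr2)] with z hz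
    have hball : ball z.2 (r / 2) ⊆ ball x r := by
      simpa only [add_halves] using
        ball_subset_ball_add (r := r / 2) (ball_subset_closedBall hz.2)
    refine norm_fderiv_sub_fderiv_le_of_norm_sub_le hr2
      ((h.differentiableOn z.1 (hsubI hz.1)).mono (hball.trans hsubV))
      ((h.differentiableOn t ht).mono (hball.trans hsubV)) fun w hw => ?_
    exact norm_sub_le_of_hasDerivAt_ball (fun τ hτ => hd τ (hsubI hτ) w (hsubV (hball hw)))
      (fun τ hτ => hC τ hτ w (hball hw)) hz.1
  have hzero : Tendsto (fun z : 𝕜 × E => C * ‖z.1 - t‖ / (r / 2)) (𝓝 (t, x)) (𝓝 0) :=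
    Continuous.tendsto' (by fun_prop) _ _ (by simp)
  have hfix : Tendsto (fun z : 𝕜 × E => fderiv ℂ (g t) z.2) (𝓝 (t, x))
      (𝓝 (fderiv ℂ (g t) x)) :=
    ((differentiableOn_fderiv hV (h.differentiableOn t ht)).continuousOn.continuousAt
      (hV.mem_nhds hx)).tendsto.comp continuousAt_snd.tendsto
  have hlim := (squeeze_zero_norm' hvary hzero).add hfix
  simp only [sub_add_cancel, zero_add] at hlim
  exact ContinuousAt.continuousWithinAt hlim

theorem hasParamDerivOn_fderiv [SMulCommClass ℂ 𝕜 F] (hI : IsOpen I) (hV : IsOpen V)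
    (h : HolomorphicFamilyOn I V g) (h' : HolomorphicFamilyOn I V g')
    (h'' : HolomorphicFamilyOn I V g'') (hd : HasParamDerivOn I V g g')
    (hd' : HasParamDerivOn I V g' g'') :
    HasParamDerivOn I V (fun t u => fderiv ℂ (g t) u)
      fun t u => fderiv ℂ (g' t) u := by
  intro t ht x hx
  obtain ⟨r, hr, C, hsubI, hsubV, hC⟩ := h''.exists_ball_prod_norm_le hI hV ht hx
  have hquad : ∀ τ ∈ ball t r, ‖fderiv ℂ (g τ) x - fderiv ℂ (g t) x -
      (τ - t) • fderiv ℂ (g' t) x‖ ≤ C / r * (‖τ - t‖ * ‖τ - t‖) := by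
    intro τ hτ
    have hgτ := (h.differentiableOn τ (hsubI hτ)).mono hsubV
    have hgt := (h.differentiableOn t ht).mono hsubV
    have hg't := ((h'.differentiableOn t ht).mono hsubV).const_smul (τ - t)
    have hball := ball_mem_nhds x hr
    have hfd : fderiv ℂ (fun u => g τ u - g t u - (τ - t) • g' t u) x =
        fderiv ℂ (g τ) x - fderiv ℂ (g t) x -
          (τ - t) • fderiv ℂ (g' t) x :=
      (((hgτ.differentiableAt hball).hasFDerivAt.sub (hgt.differentiableAt hball).hasFDerivAt).sub
        (((h'.differentiableOn t ht).differentiableAt (hV.mem_nhds hx)).hasFDerivAt.const_smul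
          (τ - t))).fderiv
    rw [← hfd]
    refine (norm_fderiv_le_of_norm_le_ball hr ((hgτ.sub hgt).sub hg't) fun w hw => ?_).trans_eq
      (by ring : C * ‖τ - t‖ * ‖τ - t‖ / r = _)
    exact norm_sub_sub_smul_le_of_hasDerivAt_ball (fun τ hτ => hd τ (hsubI hτ) w (hsubV hw))
      (fun τ hτ => hd' τ (hsubI hτ) w (hsubV hw)) (fun τ hτ => hC τ hτ w hw) hτ
  rw [hasDerivAt_iff_isLittleO]
  refine (Asymptotics.IsBigO.of_bound (g := fun τ => ‖τ - t‖ ^ 2) (C / r) ?_).trans_isLittleO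
    ((Asymptotics.isLittleO_norm_pow_id one_lt_two).comp_tendsto
      (tendsto_sub_nhds_zero_iff.2 tendsto_id))
  filter_upwards [ball_mem_nhds t hr] with τ hτ
  simpa only [norm_pow, norm_norm, ← pow_two] using hquad τ hτ

end SpaceDerivative

theorem hasDerivAt_comp {𝕜 F G : Type*} [RCLike 𝕜] [NormedAlgebra 𝕜 ℂ] [NormedAddCommGroup F]
    [NormedSpace ℂ F] [NormedSpace 𝕜 F] [IsScalarTower 𝕜 ℂ F] [NormedAddCommGroup G]
    [NormedSpace ℂ G] [CompleteSpace G] [NormedSpace 𝕜 G] [IsScalarTower 𝕜 ℂ G] {I : Set 𝕜}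
    {W : Set F} {f f' : 𝕜 → F → G} (hI : IsOpen I) (hW : IsOpen W)
    (h : HolomorphicFamilyOn I W f) (h' : HolomorphicFamilyOn I W f')
    (hd : HasParamDerivOn I W f f') {φ : 𝕜 → F} {φ' : F} {t : 𝕜} (ht : t ∈ I) (hφt : φ t ∈ W)
    (hφ : HasDerivAt φ φ' t) :
    HasDerivAt (fun τ => f τ (φ τ)) (f' t (φ t) + fderiv ℂ (f t) (φ t) φ') t := by
  have hnhds : I ×ˢ W ∈ 𝓝 (t, φ t) := (hI.prod hW).mem_nhds ⟨ht, hφt⟩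
  have hpartial₁ : ∀ᶠ v in 𝓝 (t, φ t), HasFDerivAt (fun τ => f τ v.2)
      (ContinuousLinearMap.toSpanSingleton 𝕜 (f' v.1 v.2)) v.1 := by
    filter_upwards [hnhds] with v hv using (hd v.1 hv.1 v.2 hv.2).hasFDerivAt
  have hpartial₂ : ∀ᶠ v in 𝓝 (t, φ t), HasFDerivAt (f v.1)
      ((fderiv ℂ (f v.1) v.2).restrictScalars 𝕜) v.2 := by
    filter_upwards [hnhds] with v hv
    exact ((h.differentiableOn v.1 hv.1).differentiableAt
      (hW.mem_nhds hv.2)).hasFDerivAt.restrictScalars 𝕜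
  have hcont₁ := (ContinuousLinearMap.toSpanSingletonCLE (𝕜 := 𝕜)
    (E := G)).continuous.continuousAt.comp (h'.continuousOn.continuousAt hnhds)
  have hcont₂ := (ContinuousLinearMap.restrictScalarsL ℂ F G 𝕜 𝕜).continuous.continuousAt.comp
    ((h.fderiv hI hW h' hd).continuousOn.continuousAt hnhds)
  have hjoint := hasStrictFDerivAt_uncurry_coprod (u := (t, φ t)) (f := f)
    (f₁ := fun τ u => ContinuousLinearMap.toSpanSingleton 𝕜 (f' τ u))
    (f₂ := fun τ u => (fderiv ℂ (f τ) u).restrictScalars 𝕜) hpartial₁ hpartial₂ hcont₁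
    hcont₂
  simpa [Function.comp_def, Function.HasUncurry.uncurry] using
    hjoint.hasFDerivAt.comp_hasDerivAt t ((hasDerivAt_id t).prodMk hφ)

end HolomorphicFamilyOn

/-! ### Jet lifts -/

section JetLift

variable {E F G : Type u} [NormedAddCommGroup E] [NormedSpace ℂ E]
  [NormedAddCommGroup F] [NormedSpace ℂ F] [NormedAddCommGroup G] [NormedSpace ℂ G]

/-- `L θ s u` is defined for `s` in the complex disc of radius `δ`, and `L θ 0 = g θ`; both are
holomorphic families on `V`. -/
structure HolomorphicLift (δ : ℝ) (V : Set E) (g : ℝ → E → F) (L : ℝ → ℂ → E → F) : Prop where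
  family : HolomorphicFamilyOn univ V g
  lift : ∀ θ, HolomorphicFamilyOn (ball 0 δ) V (L θ)
  lift_zero : ∀ θ, ∀ u ∈ V, L θ 0 u = g θ u

/-- `L θ` is a holomorphic map of `(s, u)`, `|s| < δ`, whose `p`-jet in `s` at `s = 0` is the
`p`-jet of `g` at `θ`. The recursion says that the `s`-derivative of `L` lifts the `θ`-derivative
of `g` to order `p - 1`, so that closure properties follow by induction from the product and
chain rules, without Faà di Bruno's formula. -/
def JetLift (δ : ℝ) (V : Set E) : ℕ → (ℝ → E → F) → (ℝ → ℂ → E → F) → Prop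
  | 0, g, L => HolomorphicLift δ V g L
  | p + 1, g, L => HolomorphicLift δ V g L ∧ ∃ g' L', HasParamDerivOn univ V g g' ∧
      (∀ θ, HasParamDerivOn (ball 0 δ) V (L θ) (L' θ)) ∧ JetLift δ V p g' L'

namespace HolomorphicLift

variable {δ : ℝ} {V : Set E} {g g₁ g₂ : ℝ → E → F} {L L₁ L₂ : ℝ → ℂ → E → F}

theorem mono {V' : Set E} (h : HolomorphicLift δ V g L) (hV : V' ⊆ V) :
    HolomorphicLift δ V' g L :=
  ⟨h.family.mono hV, fun θ => (h.lift θ).mono hV, fun θ u hu => h.lift_zero θ u (hV hu)⟩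

theorem add (h₁ : HolomorphicLift δ V g₁ L₁) (h₂ : HolomorphicLift δ V g₂ L₂) :
    HolomorphicLift δ V (fun θ u => g₁ θ u + g₂ θ u) fun θ s u => L₁ θ s u + L₂ θ s u :=
  ⟨h₁.family.add h₂.family, fun θ => (h₁.lift θ).add (h₂.lift θ),
    fun θ u hu => by rw [h₁.lift_zero θ u hu, h₂.lift_zero θ u hu]⟩

theorem clm_apply {a : ℝ → E → F →L[ℂ] G} {A : ℝ → ℂ → E → F →L[ℂ] G} {b : ℝ → E → F}
    {B : ℝ → ℂ → E → F} (ha : HolomorphicLift δ V a A) (hb : HolomorphicLift δ V b B) :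
    HolomorphicLift δ V (fun θ u => a θ u (b θ u)) fun θ s u => A θ s u (B θ s u) :=
  ⟨ha.family.clm_apply hb.family, fun θ => (ha.lift θ).clm_apply (hb.lift θ),
    fun θ u hu => by rw [ha.lift_zero θ u hu, hb.lift_zero θ u hu]⟩

theorem comp {W : Set F} {f : ℝ → F → G} {fL : ℝ → ℂ → F → G} {φ : ℝ → E → F}
    {Φ : ℝ → ℂ → E → F} (hf : HolomorphicLift δ W f fL) (hφ : HolomorphicLift δ V φ Φ)
    (hmaps : ∀ θ, MapsTo (φ θ) V W) (hMaps : ∀ θ, ∀ s ∈ ball 0 δ, MapsTo (Φ θ s) V W) :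
    HolomorphicLift δ V (fun θ u => f θ (φ θ u)) fun θ s u => fL θ s (Φ θ s u) :=
  ⟨hf.family.comp hφ.family fun θ _ => hmaps θ, fun θ => (hf.lift θ).comp (hφ.lift θ) (hMaps θ),
    fun θ u hu => by rw [hφ.lift_zero θ u hu, hf.lift_zero θ _ (hmaps θ hu)]⟩

protected theorem fderiv [CompleteSpace F] {g' : ℝ → E → F} {L' : ℝ → ℂ → E → F} (hV : IsOpen V)
    (h : HolomorphicLift δ V g L) (h' : HolomorphicLift δ V g' L')
    (hg : HasParamDerivOn univ V g g')
    (hL : ∀ θ, HasParamDerivOn (ball 0 δ) V (L θ) (L' θ)) :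
    HolomorphicLift δ V (fun θ u => fderiv ℂ (g θ) u) fun θ s u => fderiv ℂ (L θ s) u :=
  ⟨h.family.fderiv isOpen_univ hV h'.family hg,
    fun θ => (h.lift θ).fderiv isOpen_ball hV (h'.lift θ) (hL θ), fun θ u hu =>
      EventuallyEq.fderiv_eq (by filter_upwards [hV.mem_nhds hu] using h.lift_zero θ)⟩

end HolomorphicLift

namespace JetLift

variable {δ : ℝ} {V : Set E} {p : ℕ} {g g₁ g₂ : ℝ → E → F} {L L₁ L₂ : ℝ → ℂ → E → F}

theorem holomorphicLift (h : JetLift δ V p g L) : HolomorphicLift δ V g L := by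
  cases p with
  | zero => exact h
  | succ p => exact h.1

theorem of_succ (h : JetLift δ V (p + 1) g L) : JetLift δ V p g L := by
  induction p generalizing g L with
  | zero => exact h.1
  | succ p ih =>
    obtain ⟨h₀, g', L', hg, hL, h'⟩ := h
    exact ⟨h₀, g', L', hg, hL, ih h'⟩

theorem mono {V' : Set E} (h : JetLift δ V p g L) (hV : V' ⊆ V) : JetLift δ V' p g L := by
  induction p generalizing g L with
  | zero => exact HolomorphicLift.mono h hV
  | succ p ih =>
    obtain ⟨h₀, g', L', hg, hL, h'⟩ := h
    exact ⟨h₀.mono hV, g', L', fun θ hθ u hu => hg θ hθ u (hV hu),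
      fun θ s hs u hu => hL θ s hs u (hV hu), ih h'⟩

theorem const {g : E → F} (hg : DifferentiableOn ℂ g V) :
    JetLift δ V p (fun _ => g) fun _ _ => g := by
  have h₀ : ∀ {g : E → F}, DifferentiableOn ℂ g V →
      HolomorphicLift δ V (fun _ => g) fun _ _ => g :=
    fun hg => ⟨.const hg, fun _ => .const hg, fun _ _ _ => rfl⟩
  induction p generalizing g with
  | zero => exact h₀ hg
  | succ p ih =>
    exact ⟨h₀ hg, fun _ _ => 0, fun _ _ _ => 0, fun _ _ _ _ => hasDerivAt_const _ _,
      fun _ _ _ _ _ => hasDerivAt_const _ _, ih (differentiableOn_const 0)⟩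

theorem add (h₁ : JetLift δ V p g₁ L₁) (h₂ : JetLift δ V p g₂ L₂) :
    JetLift δ V p (fun θ u => g₁ θ u + g₂ θ u) fun θ s u => L₁ θ s u + L₂ θ s u := by
  induction p generalizing g₁ g₂ L₁ L₂ with
  | zero => exact HolomorphicLift.add h₁ h₂
  | succ p ih =>
    obtain ⟨h₁₀, g₁', L₁', hg₁, hL₁, h₁'⟩ := h₁
    obtain ⟨h₂₀, g₂', L₂', hg₂, hL₂, h₂'⟩ := h₂
    exact ⟨h₁₀.add h₂₀, _, _, fun θ hθ u hu => (hg₁ θ hθ u hu).add (hg₂ θ hθ u hu),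
      fun θ s hs u hu => (hL₁ θ s hs u hu).add (hL₂ θ s hs u hu), ih h₁' h₂'⟩

theorem clm_apply {a : ℝ → E → F →L[ℂ] G} {A : ℝ → ℂ → E → F →L[ℂ] G} {b : ℝ → E → F}
    {B : ℝ → ℂ → E → F} (ha : JetLift δ V p a A) (hb : JetLift δ V p b B) :
    JetLift δ V p (fun θ u => a θ u (b θ u)) fun θ s u => A θ s u (B θ s u) := by
  induction p generalizing a A b B with
  | zero => exact HolomorphicLift.clm_apply ha hb
  | succ p ih =>
    have ha₁ := ha.of_succ
    have hb₁ := hb.of_succ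
    obtain ⟨ha₀, a', A', hda, hdA, ha'⟩ := ha
    obtain ⟨hb₀, b', B', hdb, hdB, hb'⟩ := hb
    exact ⟨ha₀.clm_apply hb₀, _, _, hda.clm_apply hdb, fun θ => (hdA θ).clm_apply (hdB θ),
      (ih ha' hb₁).add (ih ha₁ hb')⟩

theorem const_smul (c : ℂ) (h : JetLift δ V p g L) :
    JetLift δ V p (fun θ u => c • g θ u) fun θ s u => c • L θ s u :=
  (const (g := fun _ => c • ContinuousLinearMap.id ℂ F) (differentiableOn_const _)).clm_apply h

theorem sub (h₁ : JetLift δ V p g₁ L₁) (h₂ : JetLift δ V p g₂ L₂) :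
    JetLift δ V p (fun θ u => g₁ θ u - g₂ θ u) fun θ s u => L₁ θ s u - L₂ θ s u := by
  simpa only [neg_smul, one_smul, ← sub_eq_add_neg] using h₁.add (h₂.const_smul (-1))

protected theorem fderiv [CompleteSpace F] (hV : IsOpen V) (h : JetLift δ V (p + 1) g L) :
    JetLift δ V p (fun θ u => fderiv ℂ (g θ) u) fun θ s u => fderiv ℂ (L θ s) u := by
  induction p generalizing g L with
  | zero =>
    obtain ⟨h₀, g', L', hg, hL, h'⟩ := h
    exact h₀.fderiv hV h' hg hL
  | succ p ih =>
    obtain ⟨h₀, g', L', hg, hL, h'⟩ := h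
    have hfd' := ih h'
    obtain ⟨h'₀, g'', L'', hg', hL', h''⟩ := h'
    have h''₀ := h''.holomorphicLift
    exact ⟨h₀.fderiv hV h'₀ hg hL, _, _,
      h₀.family.hasParamDerivOn_fderiv isOpen_univ hV h'₀.family h''₀.family hg hg',
      fun θ => (h₀.lift θ).hasParamDerivOn_fderiv isOpen_ball hV (h'₀.lift θ) (h''₀.lift θ)
        (hL θ) (hL' θ), hfd'⟩

theorem comp [CompleteSpace G] {W : Set F} (hW : IsOpen W) {f : ℝ → F → G}
    {fL : ℝ → ℂ → F → G} {φ : ℝ → E → F} {Φ : ℝ → ℂ → E → F} (hf : JetLift δ W p f fL)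
    (hφ : JetLift δ V p φ Φ) (hmaps : ∀ θ, MapsTo (φ θ) V W)
    (hMaps : ∀ θ, ∀ s ∈ ball 0 δ, MapsTo (Φ θ s) V W) :
    JetLift δ V p (fun θ u => f θ (φ θ u)) fun θ s u => fL θ s (Φ θ s u) := by
  induction p generalizing G with
  | zero => exact HolomorphicLift.comp hf hφ hmaps hMaps
  | succ p ih =>
    have hfd := hf.fderiv hW
    have hφ₁ := hφ.of_succ
    obtain ⟨hf₀, f', fL', hdf, hdfL, hf'⟩ := hf
    obtain ⟨hφ₀, φ', Φ', hdφ, hdΦ, hφ'⟩ := hφ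
    have hf'₀ := hf'.holomorphicLift
    refine ⟨hf₀.comp hφ₀ hmaps hMaps, _, _, fun θ hθ u hu => ?_, fun θ s hs u hu => ?_,
      (ih hf' hφ₁).add ((ih hfd hφ₁).clm_apply hφ')⟩
    · exact hf₀.family.hasDerivAt_comp isOpen_univ hW hf'₀.family hdf hθ (hmaps θ hu)
        (hdφ θ hθ u hu)
    · exact (hf₀.lift θ).hasDerivAt_comp isOpen_ball hW (hf'₀.lift θ) (hdfL θ) hs
        (hMaps θ s hs hu) (hdΦ θ s hs u hu)

theorem contDiff (h : JetLift δ V p g L) {u : E} (hu : u ∈ V) :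
    ContDiff ℝ p fun θ => g θ u := by
  induction p generalizing g L with
  | zero => exact contDiff_zero.2 (h.family.continuous_apply hu)
  | succ p ih =>
    obtain ⟨-, g', L', hg, -, h'⟩ := h
    have hderiv : deriv (fun θ => g θ u) = fun θ => g' θ u :=
      funext fun θ => (hg θ (mem_univ θ) u hu).deriv
    push_cast
    rw [contDiff_succ_iff_deriv, hderiv]
    exact ⟨fun θ => (hg θ (mem_univ θ) u hu).differentiableAt, by simp, ih h'⟩

theorem iteratedDeriv_eq (hδ : 0 < δ) (h : JetLift δ V p g L) {u : E} (hu : u ∈ V) {ν : ℕ}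
    (hν : ν ≤ p) (θ : ℝ) :
    iteratedDeriv ν (fun τ => g τ u) θ = iteratedDeriv ν (fun s => L θ s u) 0 := by
  induction p generalizing g L ν with
  | zero =>
    obtain rfl : ν = 0 := Nat.le_zero.1 hν
    simp only [iteratedDeriv_zero, h.lift_zero θ u hu]
  | succ p ih =>
    obtain ⟨h₀, g', L', hg, hL, h'⟩ := h
    cases ν with
    | zero => simp only [iteratedDeriv_zero, h₀.lift_zero θ u hu]
    | succ ν =>
      have hderiv : deriv (fun τ => g τ u) = fun τ => g' τ u :=
        funext fun τ => (hg τ (mem_univ τ) u hu).deriv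
      rw [iteratedDeriv_succ', iteratedDeriv_succ', hderiv, ih h' (Nat.le_of_succ_le_succ hν)]
      refine (EventuallyEq.iteratedDeriv_eq ν ?_).symm
      filter_upwards [ball_mem_nhds 0 hδ] with s hs using (hL θ s hs u hu).deriv

theorem norm_iteratedDeriv_le [CompleteSpace F] (hδ : 0 < δ) (h : JetLift δ V (p + 1) g L)
    {u : E} (hu : u ∈ V) {θ C : ℝ} (hC : ∀ s ∈ ball 0 δ, ‖L θ s u‖ ≤ C) {ν : ℕ}
    (hν : ν ≤ p + 1) :
    ‖iteratedDeriv ν (fun τ => g τ u) θ‖ ≤ ν.factorial * C / δ ^ ν := by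
  rw [h.iteratedDeriv_eq hδ hu hν]
  obtain ⟨-, _, _, -, hL, -⟩ := h
  exact norm_iteratedDeriv_le_of_norm_le_ball ν hδ
    (fun s hs => (hL θ s hs u hu).differentiableAt.differentiableWithinAt) hC

end JetLift

end JetLift

/-! ### Integrals of families and primitives of jet lifts -/

namespace HolomorphicFamilyOn

section Integral

variable {E F : Type*} [NormedAddCommGroup E] [NormedSpace ℂ E] [NormedAddCommGroup F]
  [NormedSpace ℂ F] {V : Set E}

theorem exists_ball_forall_norm_le_of_isCompact {T : Type*} [TopologicalSpace T] {k : Set T}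
    {g : T → E → F} (hk : IsCompact k) (hV : IsOpen V) (h : HolomorphicFamilyOn k V g) {x : E}
    (hx : x ∈ V) : ∃ r > 0, ∃ C, ball x r ⊆ V ∧ ∀ τ ∈ k, ∀ z ∈ ball x r, ‖g τ z‖ ≤ C := by
  obtain ⟨C, hC⟩ := hk.exists_bound_of_continuousOn (h.continuousOn_apply hx)
  have hlocal : ∀ τ ∈ k, ∀ᶠ y in 𝓝 (x, τ), y.2 ∈ k → y.1 ∈ V → ‖g y.2 y.1‖ < C + 1 := by
    intro τ hτ
    have hlt : ∀ᶠ y in 𝓝[k ×ˢ V] (τ, x), ‖g y.1 y.2‖ < C + 1 :=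
      (h.continuousOn (τ, x) ⟨hτ, hx⟩).norm.eventually_lt_const
        ((hC τ hτ).trans_lt (lt_add_one C))
    rw [eventually_nhdsWithin_iff] at hlt
    filter_upwards [(continuous_swap.tendsto (x, τ)).eventually hlt] with y hy hyk hyV
    exact hy ⟨hyk, hyV⟩
  have huniform := hk.eventually_forall_of_forall_eventually
    (P := fun z τ => τ ∈ k → z ∈ V → ‖g τ z‖ < C + 1) hlocal
  obtain ⟨r, hr, hball⟩ := Metric.mem_nhds_iff.1 (huniform.and (hV.mem_nhds hx))
  exact ⟨r, hr, C + 1, fun z hz => (hball hz).2,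
    fun τ hτ z hz => ((hball hz).1 τ hτ hτ (hball hz).2).le⟩

theorem hasFDerivAt_integral {a b : ℝ} {g : ℝ → E → F} (hV : IsOpen V)
    (h : HolomorphicFamilyOn (uIcc a b) V g)
    (hd : HolomorphicFamilyOn (uIcc a b) V fun t u => fderiv ℂ (g t) u) {x : E} (hx : x ∈ V) :
    HasFDerivAt (fun z => ∫ τ in a..b, g τ z) (∫ τ in a..b, fderiv ℂ (g τ) x) x := by
  obtain ⟨r, hr, C, hsub, hC⟩ := hd.exists_ball_forall_norm_le_of_isCompact isCompact_uIcc hV hx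
  have huIoc : uIoc a b ⊆ uIcc a b := uIoc_subset_uIcc
  refine intervalIntegral.hasFDerivAt_integral_of_dominated_of_fderiv_le (𝕜 := ℂ)
    (F' := fun z τ => fderiv ℂ (g τ) z) (bound := fun _ => C) (ball_mem_nhds x hr) ?_
    (h.continuousOn_apply hx).intervalIntegrable ?_ ?_ intervalIntegrable_const ?_
  · filter_upwards [hV.mem_nhds hx] with z hz
    exact ((h.continuousOn_apply hz).mono huIoc).aestronglyMeasurable measurableSet_uIoc
  · exact ((hd.continuousOn_apply hx).mono huIoc).aestronglyMeasurable measurableSet_uIoc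
  · exact .of_forall fun t ht z hz => hC t (huIoc ht) z hz
  · exact .of_forall fun t ht z hz =>
      ((h.differentiableOn t (huIoc ht)).differentiableAt (hV.mem_nhds (hsub hz))).hasFDerivAt

theorem hasDerivAt_primitive [CompleteSpace F] {g : ℝ → E → F} (h : HolomorphicFamilyOn univ V g)
    {u : E} (hu : u ∈ V) (a θ : ℝ) : HasDerivAt (fun θ => ∫ τ in a..θ, g τ u) (g θ u) θ :=
  (h.continuous_apply hu).integral_hasStrictDerivAt a θ |>.hasDerivAt

theorem primitive {g : ℝ → E → F} (hV : IsOpen V) (h : HolomorphicFamilyOn univ V g)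
    (hd : HolomorphicFamilyOn univ V fun t u => fderiv ℂ (g t) u) (a : ℝ) :
    HolomorphicFamilyOn univ V fun θ u => ∫ τ in a..θ, g τ u := by
  refine ⟨?_, fun θ _ u hu => ((h.mono_param (subset_univ _)).hasFDerivAt_integral hV
    (hd.mono_param (subset_univ _)) hu).differentiableAt.differentiableWithinAt⟩
  have hcont : Continuous (Function.uncurry fun (u : V) t => g t u) :=
    h.continuousOn.comp_continuous (f := fun z : V × ℝ => (z.2, (z.1 : E))) (by fun_prop)
      fun z => ⟨mem_univ _, z.1.2⟩
  rw [continuousOn_iff_continuous_domRestrict]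
  exact (intervalIntegral.continuous_parametric_primitive_of_continuous (a₀ := a)
    (μ := MeasureTheory.volume) hcont).comp
      (f := fun z : ↥((univ : Set ℝ) ×ˢ V) => ((⟨z.1.2, z.2.2⟩ : V), z.1.1)) (by fun_prop)

end Integral

end HolomorphicFamilyOn

section DiscPrimitive

variable {δ : ℝ}

theorem ofReal_mul_mem_ball_zero {s : ℂ} (hs : s ∈ ball 0 δ) {t : ℝ} (ht : t ∈ Icc (0 : ℝ) 1) :
    (t : ℂ) * s ∈ ball 0 δ := by
  rw [mem_ball_zero_iff] at *
  rw [norm_mul, Complex.norm_real, Real.norm_of_nonneg ht.1]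
  exact (mul_le_of_le_one_left (norm_nonneg s) ht.2).trans_lt hs

theorem hasDerivAt_smul_integral_segment {F : Type*} [NormedAddCommGroup F] [NormedSpace ℂ F]
    [CompleteSpace F] {H : ℂ → F} (hH : DifferentiableOn ℂ H (ball 0 δ)) {s : ℂ}
    (hs : s ∈ ball 0 δ) :
    HasDerivAt (fun s : ℂ => s • ∫ t in (0 : ℝ)..1, H (t * s)) (H s) s := by
  obtain ⟨P, hP0, hP⟩ := hH.isExactOn_ball.with_val_at 0 0
  have hsegment : ∀ s ∈ ball 0 δ, P s = s • ∫ t in (0 : ℝ)..1, H (t * s) := by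
    intro s hs
    have hderiv : ∀ t ∈ uIcc (0 : ℝ) 1,
        HasDerivAt (fun t : ℝ => P (t * s)) (s • H (t * s)) t := by
      intro t ht
      rw [uIcc_of_le zero_le_one] at ht
      have hline : HasDerivAt (fun t : ℝ => (t : ℂ) * s) s t := by
        simpa using (hasDerivAt_id t).ofReal_comp.mul_const s
      exact (hP _ (ofReal_mul_mem_ball_zero hs ht)).scomp t hline
    have hcont : ContinuousOn (fun t : ℝ => s • H (t * s)) (uIcc (0 : ℝ) 1) := by
      rw [uIcc_of_le zero_le_one]
      exact (hH.continuousOn.comp (f := fun t : ℝ => (t : ℂ) * s) (by fun_prop)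
        fun t ht => ofReal_mul_mem_ball_zero hs ht).const_smul s
    have hftc := intervalIntegral.integral_eq_sub_of_hasDerivAt hderiv hcont.intervalIntegrable
    rw [intervalIntegral.integral_smul] at hftc
    simp only [hftc, Complex.ofReal_one, one_mul, Complex.ofReal_zero, zero_mul, hP0, sub_zero]
  refine (hP s hs).congr_of_eventuallyEq ?_
  filter_upwards [isOpen_ball.mem_nhds hs] with z hz using (hsegment z hz).symm

variable {E F : Type*} [NormedAddCommGroup E] [NormedSpace ℂ E] [NormedAddCommGroup F]
  [NormedSpace ℂ F] {V : Set E} {H : ℂ → E → F}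

theorem HolomorphicFamilyOn.continuousOn_integral_segment
    (h : HolomorphicFamilyOn (ball 0 δ) V H) :
    ContinuousOn (fun x : ℂ × E => ∫ t in (0 : ℝ)..1, H (t * x.1) x.2) (ball 0 δ ×ˢ V) := by
  let clamp : ℝ → ℝ := fun t => projIcc (0 : ℝ) 1 zero_le_one t
  have hclamp : Continuous clamp := continuous_subtype_val.comp continuous_projIcc
  have hcont : Continuous (Function.uncurry fun (z : ↥(ball 0 δ ×ˢ V)) t =>
      H (clamp t * z.1.1) z.1.2) :=
    h.continuousOn.comp_continuous
      (f := fun z : ↥(ball 0 δ ×ˢ V) × ℝ => ((clamp z.2 : ℂ) * z.1.1.1, z.1.1.2)) (by fun_prop)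
      fun z => ⟨ofReal_mul_mem_ball_zero z.1.2.1 (projIcc 0 1 zero_le_one z.2).2, z.1.2.2⟩
  rw [continuousOn_iff_continuous_domRestrict]
  refine (intervalIntegral.continuous_parametric_intervalIntegral_of_continuous'
    (μ := MeasureTheory.volume) hcont 0 1).congr fun z =>
      intervalIntegral.integral_congr fun t ht => ?_
  rw [uIcc_of_le zero_le_one] at ht
  simp only [clamp, projIcc_of_mem zero_le_one ht]

theorem HolomorphicFamilyOn.integral_segment (hV : IsOpen V)
    (h : HolomorphicFamilyOn (ball 0 δ) V H)
    (hd : HolomorphicFamilyOn (ball 0 δ) V fun s u => fderiv ℂ (H s) u) :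
    HolomorphicFamilyOn (ball 0 δ) V fun s u => ∫ t in (0 : ℝ)..1, H (t * s) u := by
  have hmaps : ∀ s ∈ ball 0 δ, MapsTo (fun t : ℝ => (t : ℂ) * s) (uIcc 0 1) (ball 0 δ) := by
    rw [uIcc_of_le zero_le_one]
    exact fun s hs t ht => ofReal_mul_mem_ball_zero hs ht
  exact ⟨h.continuousOn_integral_segment, fun s hs u hu =>
    ((h.comp_param (by fun_prop) (hmaps s hs)).hasFDerivAt_integral hV
      (hd.comp_param (by fun_prop) (hmaps s hs)) hu).differentiableAt.differentiableWithinAt⟩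

end DiscPrimitive

section PrimitiveLift

variable {E F : Type u} [NormedAddCommGroup E] [NormedSpace ℂ E] [NormedAddCommGroup F]
  [NormedSpace ℂ F]

/-- The lift of `∫₀^θ h` induced by a lift `H` of `h`: at `θ` it is the holomorphic primitive of
`s ↦ H θ s u`, normalized to be `∫₀^θ h` at `s = 0`. -/
noncomputable def primitiveLift (h : ℝ → E → F) (H : ℝ → ℂ → E → F) (θ : ℝ) (s : ℂ) (u : E) : F :=
  (∫ τ in (0 : ℝ)..θ, h τ u) + s • ∫ t in (0 : ℝ)..1, H θ (t * s) u

theorem JetLift.primitive [CompleteSpace F] {δ : ℝ} {V : Set E} (hV : IsOpen V) {p : ℕ}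
    {h : ℝ → E → F} {H : ℝ → ℂ → E → F} (hH : JetLift δ V (p + 1) h H) :
    JetLift δ V (p + 2) (fun θ u => ∫ τ in (0 : ℝ)..θ, h τ u) (primitiveLift h H) := by
  have hlift := hH.holomorphicLift
  have hfderiv := (hH.fderiv hV).holomorphicLift
  have hprim := hlift.family.primitive hV hfderiv.family 0
  have hsegment := fun θ => (hlift.lift θ).integral_segment hV (hfderiv.lift θ)
  have hprimitiveLift : HolomorphicLift δ V (fun θ u => ∫ τ in (0 : ℝ)..θ, h τ u)
      (primitiveLift h H) := by
    refine ⟨hprim, fun θ => ?_, fun θ u _ => by simp only [primitiveLift, zero_smul, add_zero]⟩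
    exact (HolomorphicFamilyOn.const (hprim.differentiableOn θ (mem_univ θ))).add
      ⟨continuousOn_fst.smul (hsegment θ).continuousOn,
        fun s hs => ((hsegment θ).differentiableOn s hs).const_smul s⟩
  refine ⟨hprimitiveLift, h, H, fun θ _ u hu => hlift.family.hasDerivAt_primitive hu 0 θ, ?_, hH⟩
  obtain ⟨-, _, _, -, hderiv, -⟩ := hH
  exact fun θ s hs u hu => (hasDerivAt_smul_integral_segment
    (fun s hs => (hderiv θ s hs u hu).differentiableAt.differentiableWithinAt) hs).const_add _

end PrimitiveLift

/-! ### Taylor lifts -/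

theorem HolomorphicFamilyOn.of_norm_le {T E F : Type*} [TopologicalSpace T]
    [NormedAddCommGroup E] [NormedSpace ℂ E] [NormedAddCommGroup F] [NormedSpace ℂ F]
    [CompleteSpace F] {V : Set E} {g : T → E → F} {C : ℝ} (hV : IsOpen V)
    (hg : ∀ t, DifferentiableOn ℂ (g t) V) (hC : ∀ t, ∀ u ∈ V, ‖g t u‖ ≤ C)
    (hcont : ∀ u ∈ V, Continuous fun t => g t u) :
    HolomorphicFamilyOn univ V g := by
  refine ⟨?_, fun t _ => hg t⟩
  rintro ⟨t, x⟩ ⟨-, hx⟩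
  obtain ⟨r, hr, hsub⟩ := Metric.isOpen_iff.1 hV x hx
  rw [← add_halves r] at hsub
  have hr2 : 0 < r / 2 := half_pos hr
  have hparam : Tendsto (fun z : T × E => g z.1 x) (𝓝 (t, x)) (𝓝 (g t x)) :=
    ((hcont x hx).tendsto t).comp continuousAt_fst.tendsto
  have hlip : ∀ᶠ z in 𝓝 (t, x), ‖g z.1 z.2 - g z.1 x‖ ≤ C / (r / 2) * ‖z.2 - x‖ := by
    filter_upwards [prod_mem_nhds univ_mem (closedBall_mem_nhds x hr2)] with z hz
    exact norm_sub_le_of_norm_le_ball hr2 ((hg z.1).mono hsub) (fun w hw => hC z.1 w (hsub hw))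
      (mem_closedBall_self hr2.le) hz.2
  have hzero : Tendsto (fun z : T × E => C / (r / 2) * ‖z.2 - x‖) (𝓝 (t, x)) (𝓝 0) :=
    Continuous.tendsto' (by fun_prop) _ _ (by simp)
  have hlim := (squeeze_zero_norm' hlip hzero).add hparam
  simp only [sub_add_cancel, zero_add] at hlim
  exact ContinuousAt.continuousWithinAt hlim

section TaylorLift

variable {E F : Type u} [NormedAddCommGroup F] [NormedSpace ℂ F]

/-- The Taylor polynomial of order `m` in a complex increment `s` of the parameter, with `d i` in
the role of the `i`-th derivative with respect to the parameter. -/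
noncomputable def taylorLift (d : ℕ → ℝ → E → F) (m : ℕ) (θ : ℝ) (s : ℂ) (u : E) : F :=
  ∑ i ∈ Finset.range (m + 1), (s ^ i / i.factorial) • d i θ u

theorem taylorLift_zero (d : ℕ → ℝ → E → F) (m : ℕ) (θ : ℝ) (u : E) :
    taylorLift d m θ 0 u = d 0 θ u := by
  rw [taylorLift, Finset.sum_range_succ']
  simp

theorem hasDerivAt_taylorLift (d : ℕ → ℝ → E → F) (m : ℕ) (θ : ℝ) (s : ℂ) (u : E) :
    HasDerivAt (fun z => taylorLift d (m + 1) θ z u)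
      (taylorLift (fun i => d (i + 1)) m θ s u) s := by
  have hterm : ∀ i ∈ Finset.range (m + 1 + 1),
      HasDerivAt (fun z : ℂ => (z ^ i / (i.factorial : ℂ)) • d i θ u)
        ((i * s ^ (i - 1) / (i.factorial : ℂ)) • d i θ u) s :=
    fun i _ => ((hasDerivAt_pow i s).div_const _).smul_const _
  refine (HasDerivAt.fun_sum hterm).congr_deriv ?_
  rw [Finset.sum_range_succ']
  simp only [Nat.cast_zero, zero_mul, zero_div, zero_smul, add_zero]
  refine Finset.sum_congr rfl fun i _ => congrArg (· • d (i + 1) θ u) ?_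
  rw [Nat.add_sub_cancel, Nat.factorial_succ, Nat.cast_mul,
    mul_div_mul_left _ _ (Nat.cast_ne_zero.2 i.succ_ne_zero)]

theorem norm_taylorLift_le {d : ℕ → ℝ → E → F} {m : ℕ} {M σ θ : ℝ} {s : ℂ} {u : E}
    (hs : ‖s‖ < σ) (hM : ∀ i ≤ m, σ ^ i / i.factorial * ‖d i θ u‖ ≤ M) :
    ‖taylorLift d m θ s u‖ ≤ M / (1 - ‖s‖ / σ) := by
  have hσ : 0 < σ := (norm_nonneg s).trans_lt hs
  have hM0 : 0 ≤ M := le_trans (by positivity) (hM 0 (Nat.zero_le m))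
  have hterm : ∀ i ∈ Finset.range (m + 1),
      ‖(s ^ i / (i.factorial : ℂ)) • d i θ u‖ ≤ M * (‖s‖ / σ) ^ i := by
    intro i hi
    calc ‖(s ^ i / (i.factorial : ℂ)) • d i θ u‖
        = σ ^ i / i.factorial * ‖d i θ u‖ * (‖s‖ / σ) ^ i := by
          rw [norm_smul, norm_div, norm_pow, Complex.norm_natCast, div_pow]
          field_simp
      _ ≤ M * (‖s‖ / σ) ^ i := by
          gcongr
          exact hM i (Finset.mem_range_succ_iff.1 hi)
  have hgeom : ∑ i ∈ Finset.range (m + 1), (‖s‖ / σ) ^ i ≤ (1 - ‖s‖ / σ)⁻¹ := by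
    have hratio : ‖s‖ / σ < 1 := (div_lt_one hσ).2 hs
    rw [← tsum_geometric_of_lt_one (by positivity) hratio]
    exact (summable_geometric_of_lt_one (by positivity) hratio).sum_le_tsum _
      fun i _ => by positivity
  calc ‖taylorLift d m θ s u‖ ≤ ∑ i ∈ Finset.range (m + 1), M * (‖s‖ / σ) ^ i :=
        norm_sum_le_of_le _ hterm
    _ ≤ M / (1 - ‖s‖ / σ) := by
        rw [← Finset.mul_sum, div_eq_mul_inv]
        exact mul_le_mul_of_nonneg_left hgeom hM0

variable [NormedAddCommGroup E] [NormedSpace ℂ E]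

theorem HolomorphicFamilyOn.taylorLift {V : Set E} {d : ℕ → ℝ → E → F} {m : ℕ} {θ : ℝ}
    (hd : ∀ i ≤ m, DifferentiableOn ℂ (d i θ) V) (I : Set ℂ) :
    HolomorphicFamilyOn I V (taylorLift d m θ) where
  continuousOn := continuousOn_finsetSum _ fun i hi => ContinuousOn.smul (by fun_prop)
    ((hd i (Finset.mem_range_succ_iff.1 hi)).continuousOn.comp continuousOn_snd fun _ hx => hx.2)
  differentiableOn s _ := DifferentiableOn.fun_sum fun i hi =>
    (hd i (Finset.mem_range_succ_iff.1 hi)).const_smul _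

theorem JetLift.taylorLift {δ : ℝ} {V : Set E} {m : ℕ} {d : ℕ → ℝ → E → F}
    (hd : ∀ i ≤ m, HolomorphicFamilyOn univ V (d i))
    (hderiv : ∀ i < m, HasParamDerivOn univ V (d i) (d (i + 1))) :
    JetLift δ V m (d 0) (taylorLift d m) := by
  induction m generalizing d with
  | zero =>
    exact ⟨hd 0 le_rfl, fun θ => .taylorLift (fun i hi => (hd i hi).differentiableOn θ trivial) _,
      fun θ u _ => taylorLift_zero d 0 θ u⟩
  | succ m ih =>
    exact ⟨⟨hd 0 (Nat.zero_le _),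
      fun θ => .taylorLift (fun i hi => (hd i hi).differentiableOn θ trivial) _,
      fun θ u _ => taylorLift_zero d _ θ u⟩, d 1, _, hderiv 0 m.succ_pos,
      fun θ s _ u _ => hasDerivAt_taylorLift d m θ s u,
      ih (d := fun i => d (i + 1)) (fun i hi => hd (i + 1) (Nat.succ_le_succ hi))
        fun i hi => hderiv (i + 1) (Nat.succ_lt_succ hi)⟩

end TaylorLift

/-! ### Primitives of periodic functions with zero mean -/

section ZeroMean

variable {F : Type*} [NormedAddCommGroup F] [NormedSpace ℝ F]

theorem norm_integral_zero_one_le {g : ℝ → F} {C : ℝ} (hC : ∀ θ ∈ Icc (0 : ℝ) 1, ‖g θ‖ ≤ C) :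
    ‖∫ θ in (0 : ℝ)..1, g θ‖ ≤ C := by
  have h := intervalIntegral.norm_integral_le_of_norm_le_const (a := (0 : ℝ)) (b := 1) (f := g)
    (C := C) fun θ hθ => hC θ (Ioc_subset_Icc_self (uIoc_of_le (zero_le_one (α := ℝ)) ▸ hθ))
  rwa [sub_zero, abs_one, mul_one] at h

/-- A continuous function of period `1` with zero average over a period. Subtracting the average
produces such functions; their primitives are again periodic, hence bounded. -/
structure IsZeroMeanPeriodic (g : ℝ → F) : Prop where
  continuous : Continuous g
  periodic : Function.Periodic g 1
  integral_eq_zero : ∫ θ in (0 : ℝ)..1, g θ = 0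

namespace IsZeroMeanPeriodic

variable {g g₁ g₂ : ℝ → F}

theorem sub (h₁ : IsZeroMeanPeriodic g₁) (h₂ : IsZeroMeanPeriodic g₂) :
    IsZeroMeanPeriodic fun θ => g₁ θ - g₂ θ where
  continuous := h₁.continuous.sub h₂.continuous
  periodic := h₁.periodic.sub h₂.periodic
  integral_eq_zero := by
    rw [intervalIntegral.integral_sub (h₁.continuous.intervalIntegrable 0 1)
      (h₂.continuous.intervalIntegrable 0 1), h₁.integral_eq_zero, h₂.integral_eq_zero, sub_zero]

theorem periodic_primitive (h : IsZeroMeanPeriodic g) :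
    Function.Periodic (fun θ => ∫ τ in (0 : ℝ)..θ, g τ) 1 := by
  intro θ
  have hperiod : ∫ τ in θ..θ + 1, g τ = 0 := by
    rw [h.periodic.intervalIntegral_add_eq θ 0, zero_add, h.integral_eq_zero]
  simp only [← intervalIntegral.integral_add_adjacent_intervals
    (h.continuous.intervalIntegrable 0 θ) (h.continuous.intervalIntegrable θ (θ + 1)), hperiod,
    add_zero]

theorem norm_primitive_le (h : IsZeroMeanPeriodic g) {C : ℝ} (hC : ∀ θ, ‖g θ‖ ≤ C) (θ : ℝ) :
    ‖∫ τ in (0 : ℝ)..θ, g τ‖ ≤ C := by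
  have hfract : ∫ τ in (0 : ℝ)..θ, g τ = ∫ τ in (0 : ℝ)..Int.fract θ, g τ := by
    simpa only [mul_one, Int.self_sub_floor] using
      (h.periodic_primitive.sub_int_mul_eq (x := θ) ⌊θ⌋).symm
  rw [hfract]
  refine (intervalIntegral.norm_integral_le_of_norm_le_const fun τ _ => hC τ).trans ?_
  rw [sub_zero, Int.abs_fract]
  exact mul_le_of_le_one_right ((norm_nonneg _).trans (hC 0)) (Int.fract_lt_one θ).le

end IsZeroMeanPeriodic

end ZeroMean

section PrimitiveLift

variable {E F : Type u} [NormedAddCommGroup F] [NormedSpace ℂ F] {δ : ℝ} {h h' : ℝ → E → F}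
  {H H' : ℝ → ℂ → E → F} {θ : ℝ} {s : ℂ} {u : E}

theorem norm_primitiveLift_le {C C' : ℝ} (hh : IsZeroMeanPeriodic fun τ => h τ u)
    (hC : ∀ τ, ‖h τ u‖ ≤ C) (hC' : ∀ z ∈ ball 0 δ, ‖H θ z u‖ ≤ C') (hs : s ∈ ball 0 δ) :
    ‖primitiveLift h H θ s u‖ ≤ C + δ * C' := by
  refine norm_add_le_of_le (hh.norm_primitive_le hC θ) ?_
  rw [norm_smul]
  gcongr
  · exact (norm_nonneg _).trans (mem_ball_zero_iff.1 hs).le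
  · exact (mem_ball_zero_iff.1 hs).le
  · exact norm_integral_zero_one_le fun t ht => hC' _ (ofReal_mul_mem_ball_zero hs ht)

theorem primitiveLift_sub (hh : Continuous fun τ => h τ u) (hh' : Continuous fun τ => h' τ u)
    (hH : ContinuousOn (fun z => H θ z u) (ball 0 δ))
    (hH' : ContinuousOn (fun z => H' θ z u) (ball 0 δ)) (hs : s ∈ ball 0 δ) :
    primitiveLift h' H' θ s u - primitiveLift h H θ s u =
      primitiveLift (fun τ u => h' τ u - h τ u) (fun τ z u => H' τ z u - H τ z u) θ s u := by
  have hsegment : ∀ {G : ℂ → F}, ContinuousOn G (ball 0 δ) →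
      IntervalIntegrable (fun t : ℝ => G (t * s)) MeasureTheory.volume 0 1 := by
    refine fun hG => ContinuousOn.intervalIntegrable ?_
    rw [uIcc_of_le zero_le_one]
    exact hG.comp (f := fun t : ℝ => (t : ℂ) * s) (by fun_prop)
      fun t ht => ofReal_mul_mem_ball_zero hs ht
  simp only [primitiveLift]
  rw [intervalIntegral.integral_sub (hh'.intervalIntegrable 0 θ) (hh.intervalIntegrable 0 θ),
    intervalIntegral.integral_sub (hsegment hH') (hsegment hH), smul_sub, add_sub_add_comm]

end PrimitiveLift

/-! ### Near-identity operators -/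

section NearIdentity

variable {𝕜 E : Type*} [NontriviallyNormedField 𝕜] [NormedAddCommGroup E] [NormedSpace 𝕜 E]
  {A : E →L[𝕜] E} {C : ℝ}

theorem isInvertible_of_norm_sub_one_lt_one [CompleteSpace E] (hA : ‖A - 1‖ < 1) :
    A.IsInvertible := by
  rw [norm_sub_rev] at hA
  obtain ⟨w, hw⟩ := isUnit_one_sub_of_norm_lt_one hA
  rw [sub_sub_cancel] at hw
  exact ⟨ContinuousLinearEquiv.unitsEquiv 𝕜 E w, hw⟩

theorem one_sub_mul_norm_le_norm_apply (hA : ‖A - 1‖ ≤ C) (v : E) : (1 - C) * ‖v‖ ≤ ‖A v‖ := by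
  have hsub : ‖A v - v‖ ≤ C * ‖v‖ := (A - 1).le_of_opNorm_le hA v
  linarith [norm_sub_norm_le v (A v), norm_sub_rev v (A v)]

theorem norm_apply_le_one_add_mul_norm (hA : ‖A - 1‖ ≤ C) (v : E) : ‖A v‖ ≤ (1 + C) * ‖v‖ := by
  have hsub : ‖A v - v‖ ≤ C * ‖v‖ := (A - 1).le_of_opNorm_le hA v
  linarith [norm_sub_norm_le (A v) v]

end NearIdentity

theorem norm_fderiv_sub_one_le {E : Type*} [NormedAddCommGroup E] [NormedSpace ℂ E]
    [CompleteSpace E] {g : E → E} {x : E} {r C : ℝ} (hr : 0 < r)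
    (hg : DifferentiableOn ℂ g (ball x r)) (hC : ∀ y ∈ ball x r, ‖g y - y‖ ≤ C) :
    ‖fderiv ℂ g x - 1‖ ≤ C / r := by
  have h := norm_fderiv_sub_fderiv_le_of_norm_sub_le hr hg differentiableOn_id hC
  rwa [fderiv_id] at h

/-! ### Conjugacy residuals and the averaged vector field -/

section Residual

variable {E : Type u} [NormedAddCommGroup E] [NormedSpace ℂ E]

/-- The failure of `ψ` to map the vector field `a` to the vector field `g`, i.e.
`g ∘ ψ - Dψ a`. With `g = f θ`, `ψ = Φ^[k] θ` and `a = F^[k]` it is the integrand of the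
stroboscopic iteration. -/
noncomputable def conjugacyResidual (g ψ a : E → E) (u : E) : E :=
  g (ψ u) - fderiv ℂ ψ u (a u)

variable {g ψ ψ' a a' : E → E} {u : E}

theorem norm_conjugacyResidual_le {C : ℝ} (hψ : ‖fderiv ℂ ψ u - 1‖ ≤ C) :
    ‖conjugacyResidual g ψ a u‖ ≤ ‖g (ψ u)‖ + (1 + C) * ‖a u‖ :=
  norm_sub_le_of_le le_rfl (norm_apply_le_one_add_mul_norm hψ (a u))

theorem norm_conjugacyResidual_sub_le {C : ℝ} (hψ' : ‖fderiv ℂ ψ' u - 1‖ ≤ C) :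
    ‖conjugacyResidual g ψ' a' u - conjugacyResidual g ψ a u‖ ≤
      ‖g (ψ' u) - g (ψ u)‖ + (1 + C) * ‖a' u - a u‖ +
        ‖fderiv ℂ ψ' u - fderiv ℂ ψ u‖ * ‖a u‖ := by
  have hsplit : conjugacyResidual g ψ' a' u - conjugacyResidual g ψ a u =
      g (ψ' u) - g (ψ u) - fderiv ℂ ψ' u (a' u - a u) -
        (fderiv ℂ ψ' u - fderiv ℂ ψ u) (a u) := by
    rw [conjugacyResidual, conjugacyResidual, map_sub, sub_apply]
    abel
  rw [hsplit]
  exact norm_sub_le_of_le (norm_sub_le_of_le le_rfl (norm_apply_le_one_add_mul_norm hψ' _))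
    (ContinuousLinearMap.le_opNorm _ _)

theorem JetLift.conjugacyResidual [CompleteSpace E] {δ : ℝ} {V W : Set E} {q : ℕ}
    {f φ : ℝ → E → E} {fL P : ℝ → ℂ → E → E} (hV : IsOpen V) (hW : IsOpen W)
    (hf : JetLift δ W q f fL) (hφ : JetLift δ V (q + 1) φ P)
    (hmaps : ∀ θ, MapsTo (φ θ) V W) (hmapsL : ∀ θ, ∀ s ∈ ball 0 δ, MapsTo (P θ s) V W)
    (ha : DifferentiableOn ℂ a V) :
    JetLift δ V q (fun θ => conjugacyResidual (f θ) (φ θ) a)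
      fun θ s => conjugacyResidual (fL θ s) (P θ s) a :=
  (JetLift.comp hW hf hφ.of_succ hmaps hmapsL).sub ((hφ.fderiv hV).clm_apply (.const ha))

theorem JetLift.hasFDerivAt_thAvg [CompleteSpace E] {δ : ℝ} {V : Set E} {q : ℕ} {φ : ℝ → E → E}
    {P : ℝ → ℂ → E → E} (hV : IsOpen V) (hφ : JetLift δ V (q + 1) φ P) (hu : u ∈ V) :
    HasFDerivAt (thAvg φ) (∫ θ in (0 : ℝ)..1, fderiv ℂ (φ θ) u) u :=
  (hφ.holomorphicLift.family.mono_param (subset_univ _)).hasFDerivAt_integral hV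
    ((hφ.fderiv hV).holomorphicLift.family.mono_param (subset_univ _)) hu

theorem JetLift.differentiableOn_thAvg [CompleteSpace E] {δ : ℝ} {V : Set E} {q : ℕ}
    {φ : ℝ → E → E} {P : ℝ → ℂ → E → E} (hV : IsOpen V) (hφ : JetLift δ V (q + 1) φ P) :
    DifferentiableOn ℂ (thAvg φ) V :=
  fun _ hu => (hφ.hasFDerivAt_thAvg hV hu).differentiableAt.differentiableWithinAt

variable {f φ φ' : ℝ → E → E}

theorem fderiv_thAvg_aveField (hφ : (fderiv ℂ (thAvg φ) u).IsInvertible) :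
    fderiv ℂ (thAvg φ) u (aveField f φ u) = thAvg (fun θ v => f θ (φ θ v)) u :=
  (hφ.inverse_apply_eq.1 rfl).symm

theorem differentiableAt_aveField [CompleteSpace E] {V : Set E} (hV : IsOpen V)
    (hφ : DifferentiableOn ℂ (thAvg φ) V)
    (hfφ : DifferentiableOn ℂ (thAvg fun θ v => f θ (φ θ v)) V) (hu : u ∈ V)
    (hinv : (fderiv ℂ (thAvg φ) u).IsInvertible) : DifferentiableAt ℂ (aveField f φ) u := by
  have hmap : DifferentiableAt ℂ (ContinuousLinearMap.inverse : (E →L[ℂ] E) → E →L[ℂ] E)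
      (fderiv ℂ (thAvg φ) u) :=
    (hinv.contDiffAt_map_inverse (n := 1)).differentiableAt one_ne_zero
  exact (hmap.comp u ((differentiableOn_fderiv hV hφ).differentiableAt (hV.mem_nhds hu))).clm_apply
    (hfφ.differentiableAt (hV.mem_nhds hu))

theorem norm_aveField_sub_le {C : ℝ} (hφ : (fderiv ℂ (thAvg φ) u).IsInvertible)
    (hφ' : (fderiv ℂ (thAvg φ') u).IsInvertible) (hC : ‖fderiv ℂ (thAvg φ') u - 1‖ ≤ C) :
    (1 - C) * ‖aveField f φ' u - aveField f φ u‖ ≤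
      ‖thAvg (fun θ v => f θ (φ' θ v)) u - thAvg (fun θ v => f θ (φ θ v)) u‖ +
        ‖fderiv ℂ (thAvg φ') u - fderiv ℂ (thAvg φ) u‖ * ‖aveField f φ u‖ := by
  have hsplit : fderiv ℂ (thAvg φ') u (aveField f φ' u - aveField f φ u) =
      thAvg (fun θ v => f θ (φ' θ v)) u - thAvg (fun θ v => f θ (φ θ v)) u -
        (fderiv ℂ (thAvg φ') u - fderiv ℂ (thAvg φ) u) (aveField f φ u) := by
    rw [map_sub, sub_apply, fderiv_thAvg_aveField hφ', fderiv_thAvg_aveField hφ]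
    abel
  refine (one_sub_mul_norm_le_norm_apply hC _).trans ?_
  rw [hsplit]
  exact norm_sub_le_of_le le_rfl (ContinuousLinearMap.le_opNorm _ _)

end Residual

/-! ### One step of stroboscopic averaging -/

section Step

variable {E : Type u} [NormedAddCommGroup E] [NormedSpace ℂ E]

theorem norm_thAvg_sub_thAvg_le {g g' : ℝ → E → E} {u : E} {C : ℝ}
    (hg : Continuous fun θ => g θ u) (hg' : Continuous fun θ => g' θ u)
    (hC : ∀ θ, ‖g' θ u - g θ u‖ ≤ C) : ‖thAvg g' u - thAvg g u‖ ≤ C := by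
  rw [thAvg, thAvg, ← intervalIntegral.integral_sub (hg'.intervalIntegrable 0 1)
    (hg.intervalIntegrable 0 1)]
  exact norm_integral_zero_one_le fun θ _ => hC θ

/-- The data of an averaging step of length scale `r`: a periodic vector field `f` on `W` with a
lift `fL` to complex increments `|s| < 1/2`, their bounds, and a step size `ε` that is small
compared with `r`. The bound `6/5 * M` is the geometric series with ratio `|s| / 3 < 1/6`. -/
structure AveragingData (q : ℕ) (f : ℝ → E → E) (fL : ℝ → ℂ → E → E) (W : Set E)
    (M r ε : ℝ) : Prop where
  isOpen : IsOpen W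
  jet : JetLift (1 / 2) W (q + 1) f fL
  periodic : ∀ u ∈ W, Function.Periodic (fun θ => f θ u) 1
  norm_le : ∀ θ, ∀ u ∈ W, ‖f θ u‖ ≤ M
  norm_lift_le : ∀ θ, ∀ s ∈ ball (0 : ℂ) (1 / 2), ∀ u ∈ W, ‖fL θ s u‖ ≤ 6 / 5 * M
  bound_nonneg : 0 ≤ M
  radius_pos : 0 < r
  step_pos : 0 < ε
  step_le : 8 * (ε * M) ≤ r

/-- A near-identity periodic change of variables `φ` from `V` to `W`, together with a lift `P`.
It has one parameter derivative more than the vector field, as every step of the iteration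
integrates in the parameter. -/
structure LiftedChange (q : ℕ) (V W : Set E) (r : ℝ) (φ : ℝ → E → E) (P : ℝ → ℂ → E → E) :
    Prop where
  isOpen : IsOpen V
  jet : JetLift (1 / 2) V (q + 2) φ P
  periodic : ∀ u ∈ V, Function.Periodic (fun θ => φ θ u) 1
  norm_sub_le : ∀ θ, ∀ u ∈ V, ‖φ θ u - u‖ ≤ r / 2
  norm_lift_sub_le : ∀ θ, ∀ s ∈ ball (0 : ℂ) (1 / 2), ∀ u ∈ V, ‖P θ s u - u‖ ≤ 4 / 5 * r
  mapsTo : ∀ θ, MapsTo (φ θ) V W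
  lift_mapsTo : ∀ θ, ∀ s ∈ ball (0 : ℂ) (1 / 2), MapsTo (P θ s) V W

/-- The integrand `f ∘ φ - Dφ F` of an averaging step, `F` being the averaged field of `φ`. -/
noncomputable def stepVelocity (f φ : ℝ → E → E) (θ : ℝ) : E → E :=
  conjugacyResidual (f θ) (φ θ) (aveField f φ)

/-- The lift of `stepVelocity f φ` induced by lifts `fL` of `f` and `P` of `φ`. The averaged field
does not depend on the parameter and is not lifted. -/
noncomputable def stepVelocityLift (f : ℝ → E → E) (fL : ℝ → ℂ → E → E) (φ : ℝ → E → E)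
    (P : ℝ → ℂ → E → E) (θ : ℝ) (s : ℂ) : E → E :=
  conjugacyResidual (fL θ s) (P θ s) (aveField f φ)

namespace LiftedChange

variable {q : ℕ} {f φ φ' : ℝ → E → E} {fL P P' : ℝ → ℂ → E → E} {V V' W : Set E} {M r ε : ℝ}
  {u : E}

theorem mono (h : LiftedChange q V W r φ P) (hV' : IsOpen V') (hsub : V' ⊆ V) :
    LiftedChange q V' W r φ P where
  isOpen := hV'
  jet := h.jet.mono hsub
  periodic u hu := h.periodic u (hsub hu)
  norm_sub_le θ u hu := h.norm_sub_le θ u (hsub hu)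
  norm_lift_sub_le θ s hs u hu := h.norm_lift_sub_le θ s hs u (hsub hu)
  mapsTo θ := (h.mapsTo θ).mono_left hsub
  lift_mapsTo θ s hs := (h.lift_mapsTo θ s hs).mono_left hsub

theorem refl (hr : 0 ≤ r) (hW : IsOpen W) :
    LiftedChange q W W r (fun _ u => u) fun _ _ u => u where
  isOpen := hW
  jet := .const differentiableOn_id
  periodic _ _ _ := rfl
  norm_sub_le _ u _ := by rw [sub_self, norm_zero]; positivity
  norm_lift_sub_le _ _ _ u _ := by rw [sub_self, norm_zero]; positivity
  mapsTo _ := mapsTo_id W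
  lift_mapsTo _ _ _ := mapsTo_id W

theorem continuous_apply (h : LiftedChange q V W r φ P) (hu : u ∈ V) :
    Continuous fun θ => φ θ u :=
  h.jet.holomorphicLift.family.continuous_apply hu

theorem differentiableOn (h : LiftedChange q V W r φ P) (θ : ℝ) : DifferentiableOn ℂ (φ θ) V :=
  h.jet.holomorphicLift.family.differentiableOn θ trivial

theorem differentiableOn_lift (h : LiftedChange q V W r φ P) (θ : ℝ) {s : ℂ}
    (hs : s ∈ ball 0 (1 / 2)) : DifferentiableOn ℂ (P θ s) V :=
  (h.jet.holomorphicLift.lift θ).differentiableOn s hs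

theorem stepVelocityLift_zero (h : LiftedChange q V W r φ P)
    (D : AveragingData q f fL W M r ε) (hu : u ∈ V) (θ : ℝ) :
    stepVelocityLift f fL φ P θ 0 u = stepVelocity f φ θ u := by
  have hDP : fderiv ℂ (P θ 0) u = fderiv ℂ (φ θ) u := by
    refine EventuallyEq.fderiv_eq ?_
    filter_upwards [h.isOpen.mem_nhds hu] with y hy using h.jet.holomorphicLift.lift_zero θ y hy
  simp only [stepVelocityLift, stepVelocity, conjugacyResidual, hDP,
    h.jet.holomorphicLift.lift_zero θ u hu,
    D.jet.holomorphicLift.lift_zero θ _ (h.mapsTo θ hu)]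

variable [CompleteSpace E]

theorem norm_fderiv_sub_one_le (h : LiftedChange q V W r φ P) (hr : 0 < r)
    (hu : ball u r ⊆ V) (θ : ℝ) : ‖fderiv ℂ (φ θ) u - 1‖ ≤ 1 / 2 := by
  have hcauchy := StroboscopicAveraging.norm_fderiv_sub_one_le hr ((h.differentiableOn θ).mono hu)
    fun y hy => h.norm_sub_le θ y (hu hy)
  rwa [div_right_comm, div_self hr.ne'] at hcauchy

theorem norm_fderiv_lift_sub_one_le (h : LiftedChange q V W r φ P) (hr : 0 < r)
    (hu : ball u r ⊆ V) (θ : ℝ) {s : ℂ} (hs : s ∈ ball 0 (1 / 2)) :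
    ‖fderiv ℂ (P θ s) u - 1‖ ≤ 4 / 5 := by
  have hcauchy := StroboscopicAveraging.norm_fderiv_sub_one_le hr
    ((h.differentiableOn_lift θ hs).mono hu) fun y hy => h.norm_lift_sub_le θ s hs y (hu hy)
  rwa [mul_div_cancel_right₀ _ hr.ne'] at hcauchy

theorem norm_fderiv_thAvg_sub_one_le (h : LiftedChange q V W r φ P) (hr : 0 < r)
    (hu : ball u r ⊆ V) : ‖fderiv ℂ (thAvg φ) u - 1‖ ≤ 1 / 2 := by
  have hnear : ∀ y ∈ ball u r, ‖thAvg φ y - y‖ ≤ r / 2 := by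
    intro y hy
    simpa [thAvg] using norm_thAvg_sub_thAvg_le (g := fun _ y => y) continuous_const
      (h.continuous_apply (hu hy)) fun θ => h.norm_sub_le θ y (hu hy)
  have hcauchy := StroboscopicAveraging.norm_fderiv_sub_one_le hr
    ((h.jet.differentiableOn_thAvg h.isOpen).mono hu) hnear
  rwa [div_right_comm, div_self hr.ne'] at hcauchy

theorem isInvertible_fderiv_thAvg (h : LiftedChange q V W r φ P) (hr : 0 < r)
    (hu : ball u r ⊆ V) : (fderiv ℂ (thAvg φ) u).IsInvertible :=
  isInvertible_of_norm_sub_one_lt_one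
    ((h.norm_fderiv_thAvg_sub_one_le hr hu).trans_lt one_half_lt_one)

theorem jet_comp (h : LiftedChange q V W r φ P) (D : AveragingData q f fL W M r ε) :
    JetLift (1 / 2) V (q + 1) (fun θ u => f θ (φ θ u)) fun θ s u => fL θ s (P θ s u) :=
  .comp D.isOpen D.jet h.jet.of_succ h.mapsTo h.lift_mapsTo

theorem norm_aveField_le (h : LiftedChange q V W r φ P) (D : AveragingData q f fL W M r ε)
    (hu : ball u r ⊆ V) : ‖aveField f φ u‖ ≤ 2 * M := by
  have hinv := h.isInvertible_fderiv_thAvg D.radius_pos hu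
  have hlower := one_sub_mul_norm_le_norm_apply (h.norm_fderiv_thAvg_sub_one_le D.radius_pos hu)
    (aveField f φ u)
  have hupper : ‖thAvg (fun θ v => f θ (φ θ v)) u‖ ≤ M := norm_integral_zero_one_le fun θ _ =>
    D.norm_le θ _ (h.mapsTo θ (hu (mem_ball_self D.radius_pos)))
  rw [fderiv_thAvg_aveField hinv] at hlower
  linarith

theorem differentiableAt_aveField (h : LiftedChange q V W r φ P)
    (D : AveragingData q f fL W M r ε) (hu : ball u r ⊆ V) :
    DifferentiableAt ℂ (aveField f φ) u :=
  StroboscopicAveraging.differentiableAt_aveField h.isOpen (h.jet.differentiableOn_thAvg h.isOpen)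
    ((h.jet_comp D).differentiableOn_thAvg h.isOpen) (hu (mem_ball_self D.radius_pos))
    (h.isInvertible_fderiv_thAvg D.radius_pos hu)

theorem jet_stepVelocity (h : LiftedChange q V W r φ P) (D : AveragingData q f fL W M r ε)
    (hV' : IsOpen V') (hball : ∀ u ∈ V', ball u r ⊆ V) :
    JetLift (1 / 2) V' (q + 1) (stepVelocity f φ) (stepVelocityLift f fL φ P) :=
  have hsub : V' ⊆ V := fun u hu => hball u hu (mem_ball_self D.radius_pos)
  .conjugacyResidual hV' D.isOpen D.jet (h.jet.mono hsub) (fun θ => (h.mapsTo θ).mono_left hsub)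
    (fun θ s hs => (h.lift_mapsTo θ s hs).mono_left hsub)
    fun u hu => (h.differentiableAt_aveField D (hball u hu)).differentiableWithinAt

theorem norm_stepVelocity_le (h : LiftedChange q V W r φ P) (D : AveragingData q f fL W M r ε)
    (hu : ball u r ⊆ V) (θ : ℝ) : ‖stepVelocity f φ θ u‖ ≤ 4 * M := by
  have hresidual : ‖stepVelocity f φ θ u‖ ≤ _ :=
    norm_conjugacyResidual_le (h.norm_fderiv_sub_one_le D.radius_pos hu θ)
  linarith [D.norm_le θ _ (h.mapsTo θ (hu (mem_ball_self D.radius_pos))), h.norm_aveField_le D hu]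

theorem norm_stepVelocityLift_le (h : LiftedChange q V W r φ P)
    (D : AveragingData q f fL W M r ε) (hu : ball u r ⊆ V) (θ : ℝ) {s : ℂ}
    (hs : s ∈ ball 0 (1 / 2)) : ‖stepVelocityLift f fL φ P θ s u‖ ≤ 24 / 5 * M := by
  have hresidual : ‖stepVelocityLift f fL φ P θ s u‖ ≤ _ :=
    norm_conjugacyResidual_le (h.norm_fderiv_lift_sub_one_le D.radius_pos hu θ hs)
  linarith [D.norm_lift_le θ s hs _ (h.lift_mapsTo θ s hs (hu (mem_ball_self D.radius_pos))),
    h.norm_aveField_le D hu]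

theorem isZeroMeanPeriodic_stepVelocity (h : LiftedChange q V W r φ P)
    (D : AveragingData q f fL W M r ε) (hu : ball u r ⊆ V) :
    IsZeroMeanPeriodic fun θ => stepVelocity f φ θ u := by
  have huV : u ∈ V := hu (mem_ball_self D.radius_pos)
  have hfφ := (h.jet_comp D).holomorphicLift.family.continuous_apply huV
  have hDφ := (h.jet.fderiv h.isOpen).holomorphicLift.family.continuous_apply huV
  refine ⟨hfφ.sub (hDφ.clm_apply continuous_const), fun θ => ?_, ?_⟩
  · have hperiod : fderiv ℂ (φ (θ + 1)) u = fderiv ℂ (φ θ) u := by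
      refine EventuallyEq.fderiv_eq ?_
      filter_upwards [h.isOpen.mem_nhds huV] with y hy using h.periodic y hy θ
    simp only [stepVelocity, conjugacyResidual, hperiod, h.periodic u huV θ,
      D.periodic _ (h.mapsTo θ huV) θ]
  · simp only [stepVelocity, conjugacyResidual]
    rw [intervalIntegral.integral_sub (hfφ.intervalIntegrable 0 1)
      ((hDφ.clm_apply continuous_const).intervalIntegrable 0 1),
      ← ContinuousLinearMap.intervalIntegral_apply (hDφ.intervalIntegrable 0 1),
      ← (h.jet.hasFDerivAt_thAvg h.isOpen huV).fderiv,
      fderiv_thAvg_aveField (h.isInvertible_fderiv_thAvg D.radius_pos hu)]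
    exact sub_self _

end LiftedChange

end Step

/-! ### Contraction of the averaging step -/

section Contraction

variable {E : Type u} [NormedAddCommGroup E] [NormedSpace ℂ E] {q : ℕ} {f φ φ' : ℝ → E → E}
  {fL P P' : ℝ → ℂ → E → E} {V V' W : Set E} {M r ε a : ℝ} {u : E}

/-- One step of the stroboscopic iteration: `nextChange f ε Φ^[k] = Φ^[k+1]`. -/
noncomputable def nextChange (f : ℝ → E → E) (ε : ℝ) (φ : ℝ → E → E) (θ : ℝ) (u : E) : E :=
  u + ε • ∫ τ in (0 : ℝ)..θ, stepVelocity f φ τ u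

/-- The lift of `nextChange f ε φ` induced by lifts `fL` of `f` and `P` of `φ`. -/
noncomputable def nextLift (f : ℝ → E → E) (fL : ℝ → ℂ → E → E) (ε : ℝ) (φ : ℝ → E → E)
    (P : ℝ → ℂ → E → E) (θ : ℝ) (s : ℂ) (u : E) : E :=
  u + ε • primitiveLift (stepVelocity f φ) (stepVelocityLift f fL φ P) θ s u

/-- `φ` and `φ'` are at distance at most `a` on `V`, and their lifts `P` and `P'` at distance at
most `3/2 * a`. The factor is `1 + 1/2`, where the `1/2` is the length of the complex increments
over which an averaging step integrates. -/
structure StepBound (V : Set E) (φ φ' : ℝ → E → E) (P P' : ℝ → ℂ → E → E) (a : ℝ) : Prop where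
  base : ∀ θ, ∀ u ∈ V, ‖φ' θ u - φ θ u‖ ≤ a
  lift : ∀ θ, ∀ s ∈ ball (0 : ℂ) (1 / 2), ∀ u ∈ V, ‖P' θ s u - P θ s u‖ ≤ 3 / 2 * a

namespace LiftedChange

variable [CompleteSpace E]

theorem norm_nextChange_sub_le (h : LiftedChange q V W r φ P) (D : AveragingData q f fL W M r ε)
    (hu : ball u r ⊆ V) (θ : ℝ) : ‖nextChange f ε φ θ u - u‖ ≤ ε * (4 * M) := by
  rw [nextChange, add_sub_cancel_left, norm_smul, Real.norm_of_nonneg D.step_pos.le]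
  exact mul_le_mul_of_nonneg_left ((h.isZeroMeanPeriodic_stepVelocity D hu).norm_primitive_le
    (h.norm_stepVelocity_le D hu) θ) D.step_pos.le

theorem norm_nextLift_sub_le (h : LiftedChange q V W r φ P) (D : AveragingData q f fL W M r ε)
    (hu : ball u r ⊆ V) (θ : ℝ) {s : ℂ} (hs : s ∈ ball 0 (1 / 2)) :
    ‖nextLift f fL ε φ P θ s u - u‖ ≤ ε * (4 * M + 1 / 2 * (24 / 5 * M)) := by
  rw [nextLift, add_sub_cancel_left, norm_smul, Real.norm_of_nonneg D.step_pos.le]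
  exact mul_le_mul_of_nonneg_left (norm_primitiveLift_le (h.isZeroMeanPeriodic_stepVelocity D hu)
    (h.norm_stepVelocity_le D hu) (fun z hz => h.norm_stepVelocityLift_le D hu θ hz) hs)
    D.step_pos.le

theorem next (h : LiftedChange q V W r φ P) (D : AveragingData q f fL W M r ε)
    (hV' : IsOpen V') (hball : ∀ u ∈ V', ball u r ⊆ V) (hVW : V ⊆ W) :
    LiftedChange q V' W r (nextChange f ε φ) (nextLift f fL ε φ P) := by
  have hr := D.radius_pos
  have hnear : ∀ θ, ∀ u ∈ V', ‖nextChange f ε φ θ u - u‖ ≤ r / 2 := fun θ u hu => by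
    linarith [h.norm_nextChange_sub_le D (hball u hu) θ, D.step_le]
  have hnear_lift : ∀ θ, ∀ s ∈ ball (0 : ℂ) (1 / 2), ∀ u ∈ V',
      ‖nextLift f fL ε φ P θ s u - u‖ ≤ 4 / 5 * r := fun θ s hs u hu => by
    linarith [h.norm_nextLift_sub_le D (hball u hu) θ hs, D.step_le]
  refine ⟨hV', ?_, fun u hu θ => ?_, hnear, hnear_lift, fun θ u hu => ?_, fun θ s hs u hu => ?_⟩
  · exact (JetLift.const differentiableOn_id).add
      ((h.jet_stepVelocity D hV' hball).primitive hV' |>.const_smul (ε : ℂ))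
  · exact congrArg (u + ε • ·)
      ((h.isZeroMeanPeriodic_stepVelocity D (hball u hu)).periodic_primitive θ)
  · exact hVW (hball u hu (mem_ball_iff_norm.2 (by linarith [hnear θ u hu])))
  · exact hVW (hball u hu (mem_ball_iff_norm.2 (by linarith [hnear_lift θ s hs u hu])))

theorem norm_comp_sub_comp_le (h : LiftedChange q V W r φ P) (h' : LiftedChange q V W r φ' P')
    (D : AveragingData q f fL W M r ε) (hS : StepBound V φ φ' P P' a) (hu : u ∈ V)
    (huW : ball u (r + r) ⊆ W) (θ : ℝ) : ‖f θ (φ' θ u) - f θ (φ θ u)‖ ≤ M / r * a := by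
  have hr := D.radius_pos
  refine (norm_sub_le_of_norm_le_ball (c := u) (a := r) hr
    ((D.jet.holomorphicLift.family.differentiableOn θ trivial).mono huW)
    (fun z hz => D.norm_le θ z (huW hz)) ?_ ?_).trans
    (mul_le_mul_of_nonneg_left (hS.base θ u hu) (div_nonneg D.bound_nonneg hr.le))
  · exact mem_closedBall_iff_norm.2 (by linarith [h.norm_sub_le θ u hu])
  · exact mem_closedBall_iff_norm.2 (by linarith [h'.norm_sub_le θ u hu])

theorem norm_lift_comp_sub_lift_comp_le (h : LiftedChange q V W r φ P)
    (h' : LiftedChange q V W r φ' P') (D : AveragingData q f fL W M r ε)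
    (hS : StepBound V φ φ' P P' a) (hu : u ∈ V) (huW : ball u (r + r) ⊆ W) (θ : ℝ) {s : ℂ}
    (hs : s ∈ ball 0 (1 / 2)) : ‖fL θ s (P' θ s u) - fL θ s (P θ s u)‖ ≤ 9 / 5 * (M / r * a) := by
  have hr := D.radius_pos
  have hM := D.bound_nonneg
  calc ‖fL θ s (P' θ s u) - fL θ s (P θ s u)‖
      ≤ 6 / 5 * M / r * ‖P' θ s u - P θ s u‖ := by
        refine norm_sub_le_of_norm_le_ball (c := u) (a := r) hr
          (((D.jet.holomorphicLift.lift θ).differentiableOn s hs).mono huW)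
          (fun z hz => D.norm_lift_le θ s hs z (huW hz)) ?_ ?_
        · exact mem_closedBall_iff_norm.2 (by linarith [h.norm_lift_sub_le θ s hs u hu])
        · exact mem_closedBall_iff_norm.2 (by linarith [h'.norm_lift_sub_le θ s hs u hu])
    _ ≤ 6 / 5 * M / r * (3 / 2 * a) := by gcongr; exact hS.lift θ s hs u hu
    _ = 9 / 5 * (M / r * a) := by ring

theorem norm_aveField_sub_le (h : LiftedChange q V W r φ P) (h' : LiftedChange q V W r φ' P')
    (D : AveragingData q f fL W M r ε) (hS : StepBound V φ φ' P P' a) (hu : ball u r ⊆ V)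
    (huW : ball u (r + r) ⊆ W) : ‖aveField f φ' u - aveField f φ u‖ ≤ 6 * (M / r * a) := by
  have hr := D.radius_pos
  have huV : u ∈ V := hu (mem_ball_self hr)
  have hcomp : ‖thAvg (fun θ v => f θ (φ' θ v)) u - thAvg (fun θ v => f θ (φ θ v)) u‖ ≤
      M / r * a :=
    norm_thAvg_sub_thAvg_le ((h.jet_comp D).holomorphicLift.family.continuous_apply huV)
      ((h'.jet_comp D).holomorphicLift.family.continuous_apply huV)
      (h.norm_comp_sub_comp_le h' D hS huV huW)
  have hfderiv : ‖fderiv ℂ (thAvg φ') u - fderiv ℂ (thAvg φ) u‖ ≤ a / r :=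
    norm_fderiv_sub_fderiv_le_of_norm_sub_le hr
      ((h'.jet.differentiableOn_thAvg h'.isOpen).mono hu)
      ((h.jet.differentiableOn_thAvg h.isOpen).mono hu) fun z hz =>
      norm_thAvg_sub_thAvg_le (h.continuous_apply (hu hz)) (h'.continuous_apply (hu hz))
        fun θ => hS.base θ z (hu hz)
  have hdiff := StroboscopicAveraging.norm_aveField_sub_le (f := f)
    (h.isInvertible_fderiv_thAvg hr hu) (h'.isInvertible_fderiv_thAvg hr hu)
    (h'.norm_fderiv_thAvg_sub_one_le hr hu)
  have hprod := mul_le_mul hfderiv (h.norm_aveField_le D hu) (norm_nonneg _)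
    ((norm_nonneg _).trans hfderiv)
  have hscale : a / r * (2 * M) = 2 * (M / r * a) := by ring
  linarith

theorem norm_stepVelocityLift_sub_le (h : LiftedChange q V W r φ P)
    (h' : LiftedChange q V W r φ' P') (D : AveragingData q f fL W M r ε)
    (hS : StepBound V φ φ' P P' a) (hu : ball u r ⊆ V) (huW : ball u (r + r) ⊆ W) (θ : ℝ) {s : ℂ}
    (hs : s ∈ ball 0 (1 / 2)) :
    ‖stepVelocityLift f fL φ' P' θ s u - stepVelocityLift f fL φ P θ s u‖ ≤
      16 * (M / r * a) := by
  have hr := D.radius_pos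
  have huV : u ∈ V := hu (mem_ball_self hr)
  have hscaled : 0 ≤ M / r * a := mul_nonneg (div_nonneg D.bound_nonneg hr.le)
    ((norm_nonneg _).trans (hS.base 0 u huV))
  have hfderiv : ‖fderiv ℂ (P' θ s) u - fderiv ℂ (P θ s) u‖ ≤ 3 / 2 * a / r :=
    norm_fderiv_sub_fderiv_le_of_norm_sub_le hr ((h'.differentiableOn_lift θ hs).mono hu)
      ((h.differentiableOn_lift θ hs).mono hu) fun z hz => hS.lift θ s hs z (hu hz)
  have hresidual : ‖stepVelocityLift f fL φ' P' θ s u - stepVelocityLift f fL φ P θ s u‖ ≤ _ :=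
    norm_conjugacyResidual_sub_le (h'.norm_fderiv_lift_sub_one_le hr hu θ hs)
  have hprod := mul_le_mul hfderiv (h.norm_aveField_le D hu) (norm_nonneg _)
    ((norm_nonneg _).trans hfderiv)
  have hscale : 3 / 2 * a / r * (2 * M) = 3 * (M / r * a) := by ring
  linarith [h.norm_lift_comp_sub_lift_comp_le h' D hS huV huW θ hs,
    h.norm_aveField_sub_le h' D hS hu huW]

theorem norm_stepVelocity_sub_le (h : LiftedChange q V W r φ P)
    (h' : LiftedChange q V W r φ' P') (D : AveragingData q f fL W M r ε)
    (hS : StepBound V φ φ' P P' a) (hu : ball u r ⊆ V) (huW : ball u (r + r) ⊆ W) (θ : ℝ) :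
    ‖stepVelocity f φ' θ u - stepVelocity f φ θ u‖ ≤ 16 * (M / r * a) := by
  have huV : u ∈ V := hu (mem_ball_self D.radius_pos)
  rw [← h.stepVelocityLift_zero D huV, ← h'.stepVelocityLift_zero D huV]
  exact h.norm_stepVelocityLift_sub_le h' D hS hu huW θ (mem_ball_self one_half_pos)

/-- Freezing the averaged field at one point gives a jet on all of `V`, including points at
distance less than `r` from the boundary, where `aveField` is not controlled. -/
theorem jet_conjugacyResidual_const (h : LiftedChange q V W r φ P)
    (D : AveragingData q f fL W M r ε) (v : E) :
    JetLift (1 / 2) V (q + 1) (fun θ => conjugacyResidual (f θ) (φ θ) fun _ => v)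
      fun θ s => conjugacyResidual (fL θ s) (P θ s) fun _ => v :=
  .conjugacyResidual h.isOpen D.isOpen D.jet h.jet h.mapsTo h.lift_mapsTo
    (differentiableOn_const v)

theorem contDiff_stepVelocity (h : LiftedChange q V W r φ P)
    (D : AveragingData q f fL W M r ε) (hu : u ∈ V) :
    ContDiff ℝ (q + 1 : ℕ) fun θ => stepVelocity f φ θ u :=
  (h.jet_conjugacyResidual_const D (aveField f φ u)).contDiff hu

theorem norm_iteratedDeriv_stepVelocity_sub_le (h : LiftedChange q V W r φ P)
    (h' : LiftedChange q V W r φ' P') (D : AveragingData q f fL W M r ε)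
    (hS : StepBound V φ φ' P P' a) (hu : ball u r ⊆ V) (huW : ball u (r + r) ⊆ W) (θ : ℝ) {ν : ℕ}
    (hν : ν ≤ q + 1) :
    ‖iteratedDeriv ν (fun τ => stepVelocity f φ τ u - stepVelocity f φ' τ u) θ‖ ≤
      ν.factorial * (16 * (M / r * a)) / (1 / 2) ^ ν := by
  have hjet := (h.jet_conjugacyResidual_const D (aveField f φ u)).sub
    (h'.jet_conjugacyResidual_const D (aveField f φ' u))
  refine hjet.norm_iteratedDeriv_le one_half_pos (hu (mem_ball_self D.radius_pos))
    (fun s hs => ?_) hν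
  rw [norm_sub_rev]
  exact h.norm_stepVelocityLift_sub_le h' D hS hu huW θ hs

theorem stepBound_next_refl (D : AveragingData q f fL W M r ε) (hV : ∀ u ∈ V, ball u r ⊆ W) :
    StepBound V (fun _ u => u) (nextChange f ε fun _ u => u) (fun _ _ u => u)
      (nextLift f fL ε (fun _ u => u) fun _ _ u => u) (ε * (24 / 5 * M)) where
  base θ u hu := by
    have hεM := mul_nonneg D.step_pos.le D.bound_nonneg
    linarith [(refl (q := q) D.radius_pos.le D.isOpen).norm_nextChange_sub_le D (hV u hu) θ]
  lift θ s hs u hu := by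
    have hεM := mul_nonneg D.step_pos.le D.bound_nonneg
    linarith [(refl (q := q) D.radius_pos.le D.isOpen).norm_nextLift_sub_le D (hV u hu) θ hs]

theorem norm_nextLift_sub_nextLift_le (h : LiftedChange q V W r φ P)
    (h' : LiftedChange q V W r φ' P') (D : AveragingData q f fL W M r ε)
    (hS : StepBound V φ φ' P P' a) (hV' : IsOpen V') (hball : ∀ u ∈ V', ball u r ⊆ V)
    (hballW : ∀ u ∈ V', ball u (r + r) ⊆ W) (hu : u ∈ V') (θ : ℝ) {s : ℂ}
    (hs : s ∈ ball 0 (1 / 2)) :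
    ‖nextLift f fL ε φ' P' θ s u - nextLift f fL ε φ P θ s u‖ ≤
      3 / 2 * (ε * (16 * (M / r * a))) := by
  have hmean := h.isZeroMeanPeriodic_stepVelocity D (hball u hu)
  have hmean' := h'.isZeroMeanPeriodic_stepVelocity D (hball u hu)
  have hlift := (h.jet_stepVelocity D hV' hball).holomorphicLift.lift θ
  have hlift' := (h'.jet_stepVelocity D hV' hball).holomorphicLift.lift θ
  rw [nextLift, nextLift, add_sub_add_left_eq_sub, ← smul_sub, norm_smul,
    Real.norm_of_nonneg D.step_pos.le,
    primitiveLift_sub hmean.continuous hmean'.continuous (hlift.continuousOn_apply hu)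
      (hlift'.continuousOn_apply hu) hs]
  refine (mul_le_mul_of_nonneg_left (norm_primitiveLift_le
    (h := fun τ u => stepVelocity f φ' τ u - stepVelocity f φ τ u)
    (H := fun τ z u => stepVelocityLift f fL φ' P' τ z u - stepVelocityLift f fL φ P τ z u)
    (hmean'.sub hmean) (h.norm_stepVelocity_sub_le h' D hS (hball u hu) (hballW u hu))
    (fun z hz => h.norm_stepVelocityLift_sub_le h' D hS (hball u hu) (hballW u hu) θ hz) hs)
    D.step_pos.le).trans_eq ?_
  ring

theorem norm_nextChange_sub_nextChange_le (h : LiftedChange q V W r φ P)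
    (h' : LiftedChange q V W r φ' P') (D : AveragingData q f fL W M r ε)
    (hS : StepBound V φ φ' P P' a) (hu : ball u r ⊆ V) (huW : ball u (r + r) ⊆ W) (θ : ℝ) :
    ‖nextChange f ε φ' θ u - nextChange f ε φ θ u‖ ≤ ε * (16 * (M / r * a)) := by
  have hmean := h.isZeroMeanPeriodic_stepVelocity D hu
  have hmean' := h'.isZeroMeanPeriodic_stepVelocity D hu
  rw [nextChange, nextChange, add_sub_add_left_eq_sub, ← smul_sub, norm_smul,
    Real.norm_of_nonneg D.step_pos.le, ← intervalIntegral.integral_sub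
      (hmean'.continuous.intervalIntegrable 0 θ) (hmean.continuous.intervalIntegrable 0 θ)]
  exact mul_le_mul_of_nonneg_left ((hmean'.sub hmean).norm_primitive_le
    (h.norm_stepVelocity_sub_le h' D hS hu huW) θ) D.step_pos.le

theorem stepBound_next (h : LiftedChange q V W r φ P) (h' : LiftedChange q V W r φ' P')
    (D : AveragingData q f fL W M r ε) (hS : StepBound V φ φ' P P' a) (hV' : IsOpen V')
    (hball : ∀ u ∈ V', ball u r ⊆ V) (hballW : ∀ u ∈ V', ball u (r + r) ⊆ W) :
    StepBound V' (nextChange f ε φ) (nextChange f ε φ') (nextLift f fL ε φ P)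
      (nextLift f fL ε φ' P') (ε * (16 * (M / r * a))) where
  base θ u hu := h.norm_nextChange_sub_nextChange_le h' D hS (hball u hu) (hballW u hu) θ
  lift θ _ hs _ hu := h.norm_nextLift_sub_nextLift_le h' D hS hV' hball hballW hu θ hs

end LiftedChange

end Contraction

/-! ### The defect of stroboscopic averaging -/

section Iteration

variable {E : Type u} [NormedAddCommGroup E] [NormedSpace ℂ E] {q : ℕ} {f : ℝ → E → E}
  {fL : ℝ → ℂ → E → E} {M R r ε : ℝ} {c : E}

/-- The lifts of the iterates `PhiIter f ε k` induced by the lift `fL` of `f`. -/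
noncomputable def liftIter (f : ℝ → E → E) (fL : ℝ → ℂ → E → E) (ε : ℝ) : ℕ → ℝ → ℂ → E → E
  | 0 => fun _ _ u => u
  | k + 1 => nextLift f fL ε (PhiIter f ε k) (liftIter f fL ε k)

theorem defect_succ [CompleteSpace E] (hε : ε ≠ 0) {k : ℕ} {u : E}
    (hcont : Continuous fun θ => stepVelocity f (PhiIter f ε k) θ u) (θ : ℝ) :
    defect f ε (k + 1) θ u =
      stepVelocity f (PhiIter f ε k) θ u - stepVelocity f (PhiIter f ε (k + 1)) θ u := by
  have hderiv : HasDerivAt (fun τ => PhiIter f ε (k + 1) τ u)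
      (ε • stepVelocity f (PhiIter f ε k) θ u) θ :=
    ((hcont.integral_hasStrictDerivAt 0 θ).hasDerivAt.const_smul ε).const_add u
  rw [defect, hderiv.deriv, smul_smul, one_div_mul_cancel hε, one_smul, add_sub_assoc,
    ← neg_sub (f θ _), ← sub_eq_add_neg]
  rfl

variable [CompleteSpace E]

theorem liftedChange_phiIter (D : AveragingData q f fL (ball c R) M r ε) {k : ℕ} {ρ : ℝ}
    (hρ : ρ + k * r ≤ R) :
    LiftedChange q (ball c ρ) (ball c R) r (PhiIter f ε k) (liftIter f fL ε k) := by
  have hr := D.radius_pos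
  induction k generalizing ρ with
  | zero =>
    exact (LiftedChange.refl (W := ball c R) hr.le isOpen_ball).mono isOpen_ball
      (ball_subset_ball (by simpa using hρ))
  | succ k ih =>
    push_cast at hρ
    have hkr : 0 ≤ k * r := by positivity
    exact (ih (ρ := ρ + r) (by linarith)).next D isOpen_ball
      (fun u hu => ball_subset_ball_add (ball_subset_closedBall hu))
      (ball_subset_ball (by linarith))

theorem stepBound_phiIter (D : AveragingData q f fL (ball c R) M r ε) {k : ℕ} {ρ : ℝ}
    (hρ : ρ + (k + 1) * r ≤ R) :
    StepBound (ball c ρ) (PhiIter f ε k) (PhiIter f ε (k + 1)) (liftIter f fL ε k)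
      (liftIter f fL ε (k + 1)) (ε * (24 / 5 * M) * (16 * (ε * M / r)) ^ k) := by
  have hr := D.radius_pos
  have hball : ∀ {t : ℝ}, ∀ u ∈ ball c ρ, ball u t ⊆ ball c (ρ + t) :=
    fun u hu => ball_subset_ball_add (ball_subset_closedBall hu)
  induction k generalizing ρ with
  | zero =>
    rw [pow_zero, mul_one]
    exact LiftedChange.stepBound_next_refl D fun u hu =>
      (hball u hu).trans (ball_subset_ball (by simpa using hρ))
  | succ k ih =>
    push_cast at hρ
    have hkr : 0 ≤ k * r := by positivity
    have hscale : ε * (24 / 5 * M) * (16 * (ε * M / r)) ^ (k + 1) =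
        ε * (16 * (M / r * (ε * (24 / 5 * M) * (16 * (ε * M / r)) ^ k))) := by ring
    rw [hscale]
    exact (liftedChange_phiIter D (ρ := ρ + r) (by linarith)).stepBound_next
      (liftedChange_phiIter D (by push_cast; linarith)) D
      (ih (by linarith) fun u hu => ball_subset_ball_add (ball_subset_closedBall hu)) isOpen_ball
      hball fun u hu => (hball u hu).trans (ball_subset_ball (by linarith))

theorem contDiff_stepVelocity_phiIter (D : AveragingData q f fL (ball c R) M r ε) {k : ℕ}
    (hk : (k + 1) * r ≤ R) :
    ContDiff ℝ (q + 1 : ℕ) fun θ => stepVelocity f (PhiIter f ε k) θ c :=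
  (liftedChange_phiIter D (ρ := r) (by linarith)).contDiff_stepVelocity D
    (mem_ball_self D.radius_pos)

theorem defect_succ_eq (D : AveragingData q f fL (ball c R) M r ε) {k : ℕ}
    (hk : (k + 1) * r ≤ R) :
    (fun θ => defect f ε (k + 1) θ c) = fun θ =>
      stepVelocity f (PhiIter f ε k) θ c - stepVelocity f (PhiIter f ε (k + 1)) θ c :=
  funext (defect_succ D.step_pos.ne' (contDiff_stepVelocity_phiIter D hk).continuous)

theorem contDiff_defect_succ (D : AveragingData q f fL (ball c R) M r ε) {k : ℕ}
    (hk : (k + 2) * r ≤ R) : ContDiff ℝ (q + 1 : ℕ) fun θ => defect f ε (k + 1) θ c := by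
  have hr := D.radius_pos
  have hk' : (k + 1) * r ≤ R := by linarith
  rw [defect_succ_eq D hk']
  exact (contDiff_stepVelocity_phiIter D hk').sub
    (contDiff_stepVelocity_phiIter D (by push_cast; linarith))

theorem norm_iteratedDeriv_defect_succ_le (D : AveragingData q f fL (ball c R) M r ε) {k : ℕ}
    (hk : (k + 2) * r ≤ R) (θ : ℝ) {ν : ℕ} (hν : ν ≤ q + 1) :
    ‖iteratedDeriv ν (fun τ => defect f ε (k + 1) τ c) θ‖ ≤
      ν.factorial * 2 ^ ν * (24 / 5 * M * (16 * (ε * M / r)) ^ (k + 1)) := by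
  have hr := D.radius_pos
  have hkr : 0 ≤ k * r := by positivity
  rw [defect_succ_eq D (by linarith)]
  refine ((liftedChange_phiIter D (by linarith)).norm_iteratedDeriv_stepVelocity_sub_le
    (liftedChange_phiIter D (by push_cast; linarith)) D (stepBound_phiIter D (by linarith))
    subset_rfl (ball_subset_ball (by linarith)) θ hν).trans_eq ?_
  rw [one_div, inv_pow, div_inv_eq_mul]
  ring

end Iteration

/-- The constant `𝒬_p` of the defect estimate. -/
noncomputable def stroboscopicConst (p : ℕ) : ℝ :=
  5 + 2 ^ (p + 1) * Real.exp (5 / 2) * p.factorial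

theorem factorial_mul_two_pow_le_stroboscopicConst {p ν n : ℕ} (hν : ν ≤ p) (hn : n ≠ 0) :
    12 / 5 * (ν.factorial * 2 ^ ν : ℝ) ≤ stroboscopicConst p ^ n := by
  have hfactorial : (ν.factorial : ℝ) ≤ p.factorial := mod_cast Nat.factorial_le hν
  have hpow : (2 : ℝ) ^ ν ≤ 2 ^ p := pow_le_pow_right₀ one_le_two hν
  have hexp : 12 / 5 ≤ 2 * Real.exp (5 / 2) := by linarith [Real.add_one_le_exp (5 / 2 : ℝ)]
  have hone : 1 ≤ stroboscopicConst p := by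
    rw [stroboscopicConst]
    exact le_add_of_le_of_nonneg (by norm_num) (by positivity)
  calc 12 / 5 * (ν.factorial * 2 ^ ν : ℝ)
      ≤ 2 * Real.exp (5 / 2) * (p.factorial * 2 ^ p) := by gcongr
    _ ≤ stroboscopicConst p := by rw [stroboscopicConst, pow_succ]; linarith
    _ ≤ stroboscopicConst p ^ n := le_self_pow₀ hone hn

theorem averagingData_taylorLift {E : Type u} [NormedAddCommGroup E] [NormedSpace ℂ E]
    [CompleteSpace E] {f : ℝ → E → E} {W : Set E} {q : ℕ} {M r ε : ℝ} (hW : IsOpen W)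
    (hperiodic : ∀ u ∈ W, Function.Periodic (fun θ => f θ u) 1)
    (hsmooth : ∀ u ∈ W, ContDiff ℝ (q + 1 : ℕ) fun θ => f θ u)
    (hdiff : ∀ ν ≤ q + 1, ∀ θ, DifferentiableOn ℂ (fun u => iteratedDeriv ν (f · u) θ) W)
    (hbound : ∀ ν ≤ q + 1, ∀ θ, ∀ u ∈ W,
      3 ^ ν / ν.factorial * ‖iteratedDeriv ν (f · u) θ‖ ≤ M)
    (hM : 0 ≤ M) (hr : 0 < r) (hε : 0 < ε) (hstep : 8 * (ε * M) ≤ r) :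
    AveragingData q f (taylorLift (fun ν θ u => iteratedDeriv ν (f · u) θ) (q + 1)) W M r ε where
  isOpen := hW
  jet := by
    have hfamily : ∀ ν ≤ q + 1,
        HolomorphicFamilyOn univ W fun θ u => iteratedDeriv ν (f · u) θ := by
      refine fun ν hν => .of_norm_le (C := M / (3 ^ ν / ν.factorial)) hW (hdiff ν hν)
        (fun θ u hu => ?_) fun u hu => (hsmooth u hu).continuous_iteratedDeriv ν (mod_cast hν)
      rw [le_div_iff₀' (by positivity)]
      exact hbound ν hν θ u hu
    have hderiv : ∀ ν < q + 1, HasParamDerivOn univ W (fun θ u => iteratedDeriv ν (f · u) θ)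
        fun θ u => iteratedDeriv (ν + 1) (f · u) θ := by
      intro ν hν θ _ u hu
      have h := ((hsmooth u hu).differentiable_iteratedDeriv ν (mod_cast hν) θ).hasDerivAt
      rwa [← iteratedDeriv_succ] at h
    simpa only [iteratedDeriv_zero] using JetLift.taylorLift hfamily hderiv
  periodic := hperiodic
  norm_le θ u hu := by simpa using hbound 0 (Nat.zero_le _) θ u hu
  norm_lift_le θ s hs u hu := by
    rw [mem_ball_zero_iff] at hs
    refine (norm_taylorLift_le (σ := 3) (by linarith) fun ν hν => hbound ν hν θ u hu).trans ?_
    rw [div_le_iff₀ (by linarith)]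
    nlinarith
  bound_nonneg := hM
  radius_pos := hr
  step_pos := hε
  step_le := hstep

theorem ball_subset_Kset {X E : Type*} [NormedAddCommGroup X] [NormedSpace ℝ X]
    [NormedAddCommGroup E] [NormedSpace ℂ E] {ι : X →ₗᵢ[ℝ] E} {K : Set X} {R : ℝ} {c : E}
    (hc : c ∈ Kset ι K R) : ball c R ⊆ Kset ι K (2 * R) := by
  obtain ⟨x, hx, w, hw, rfl⟩ := hc
  refine fun z hz => ⟨x, hx, z - ι x, ?_, (add_sub_cancel _ _).symm⟩
  rw [mem_ball_iff_norm, ← sub_sub] at hz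
  linarith [norm_le_norm_sub_add (z - ι x) w]

theorem factorial_mul_contraction_pow_le {p ν n : ℕ} {R M ε : ℝ} (hν : ν ≤ p) (hn : n ≠ 0)
    (hR : 0 < R) (hM : 0 < M) (hε : 0 < ε) :
    ν.factorial * 2 ^ ν * (24 / 5 * M * (16 * (ε * M / (R / (n + 1)))) ^ n) ≤
      2 * M * (2 * stroboscopicConst p * (n + 1) * ε / (R / (8 * M))) ^ n := by
  have hratio : 2 * stroboscopicConst p * (n + 1) * ε / (R / (8 * M)) =
      stroboscopicConst p * (16 * (ε * M / (R / (n + 1)))) := by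
    field_simp
    ring
  rw [hratio, mul_pow (stroboscopicConst p)]
  calc ν.factorial * 2 ^ ν * (24 / 5 * M * (16 * (ε * M / (R / (n + 1)))) ^ n)
      = 2 * M * (12 / 5 * (ν.factorial * 2 ^ ν) * (16 * (ε * M / (R / (n + 1)))) ^ n) := by ring
    _ ≤ 2 * M * (stroboscopicConst p ^ n * (16 * (ε * M / (R / (n + 1)))) ^ n) := by
        gcongr
        exact factorial_mul_two_pow_le_stroboscopicConst hν hn

end StroboscopicAveraging

theorem statement5_general {E : Type*} [NormedAddCommGroup E] [NormedSpace ℂ E] [CompleteSpace E]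
    {f : ℝ → E → E} {S W : Set E} {p n : ℕ} {R M ε : ℝ} (hp : 1 ≤ p) (hn : 1 ≤ n) (hR : 0 < R)
    (hM : 0 < M) (hε : 0 < ε) (hnε : (n + 1) * ε ≤ R / (8 * M))
    (hSW : ∀ u ∈ S, Metric.ball u R ⊆ W)
    (hperiodic : ∀ u ∈ W, Function.Periodic (fun θ => f θ u) 1)
    (hsmooth : ∀ u ∈ W, ContDiff ℝ p fun θ => f θ u)
    (hdiff : ∀ ν ≤ p, ∀ θ, DifferentiableOn ℂ (fun u => iteratedDeriv ν (f · u) θ) W)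
    (hbound : ∀ ν ≤ p, ∀ θ, ∀ u ∈ W, 3 ^ ν / ν.factorial * ‖iteratedDeriv ν (f · u) θ‖ ≤ M) :
    (∀ u ∈ S, ContDiff ℝ p fun θ => defect f ε n θ u) ∧
      ∀ ν ≤ p, ∀ θ, ∀ u ∈ S, ‖iteratedDeriv ν (fun τ => defect f ε n τ u) θ‖ ≤
        2 * M *
          (2 * StroboscopicAveraging.stroboscopicConst p * (n + 1) * ε / (R / (8 * M))) ^ n := by
  obtain ⟨q, rfl⟩ := Nat.exists_eq_add_of_le' hp
  obtain ⟨k, rfl⟩ := Nat.exists_eq_add_of_le' hn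
  have hstep : 8 * (ε * M) ≤ R / ((k + 1 : ℕ) + 1) := by
    rw [le_div_iff₀ (by positivity)] at hnε ⊢
    linarith
  have hradii : (k + 2) * (R / ((k + 1 : ℕ) + 1)) ≤ R := by
    push_cast
    rw [add_assoc, one_add_one_eq_two, mul_div_cancel₀ R (by positivity)]
  have D := fun u hu => StroboscopicAveraging.averagingData_taylorLift Metric.isOpen_ball
    (fun v hv => hperiodic v (hSW u hu hv)) (fun v hv => hsmooth v (hSW u hu hv))
    (fun ν hν θ => (hdiff ν hν θ).mono (hSW u hu))
    (fun ν hν θ v hv => hbound ν hν θ v (hSW u hu hv)) hM.le (by positivity) hε hstep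
  exact ⟨fun u hu => StroboscopicAveraging.contDiff_defect_succ (D u hu) hradii,
    fun ν hν θ u hu => (StroboscopicAveraging.norm_iteratedDeriv_defect_succ_le (D u hu)
      hradii θ hν).trans
        (StroboscopicAveraging.factorial_mul_contraction_pow_le hν k.succ_ne_zero hR hM hε)⟩

/-- Theorem: under Assumptions (K) and (A_p), with `ε₀ = R/(8M)` and `(n+1)ε ≤ ε₀`,
the defect `δ^[n]` is `p` times continuously differentiable in `θ` and
`‖δ^[n]‖_{R,p} ≤ 2M (2 𝒬_p (n+1) ε/ε₀)^n` with `𝒬_p = 5 + 2^{p+1} e^{5/2} p!`. -/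
theorem statement5
    {X Xc : Type*} [NormedAddCommGroup X] [NormedSpace ℝ X] [CompleteSpace X]
    [NormedAddCommGroup Xc] [NormedSpace ℂ Xc] [CompleteSpace Xc]
    (ι : X →ₗᵢ[ℝ] Xc)
    (K U0 : Set X) (hKopen : IsOpen K) (hKbdd : Bornology.IsBounded (closure K))
    (hU0open : IsOpen U0) (hU0K : U0 ⊆ K)
    (fX : ℝ → X → X) (fC : ℝ → Xc → Xc)
    (hper : ∀ u, Function.Periodic (fun θ => fX θ u) 1)
    (hperC : ∀ u, Function.Periodic (fun θ => fC θ u) 1)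
    -- Assumption (K)
    (hAssK : ∀ u₀ ∈ U0, ∀ ε ∈ Set.Ioc (0:ℝ) 1, ∃ u : ℝ → X, u 0 = u₀ ∧
      ∀ t ∈ Set.Icc (0:ℝ) 1, HasDerivAt u (fX (t/ε) (u t)) t ∧ u t ∈ K)
    -- Assumption (A_p)
    (p : ℕ) (hp : 1 ≤ p)
    (R M : ℝ) (hR : 0 < R) (hM : 0 < M)
    (hcontdiffθ : ∀ u, ContDiff ℝ p (fun θ => fC θ u))
    (hext : ∀ θ, ∀ x : X, ι x ∈ Kset ι K (2*R) → fC θ (ι x) = ι (fX θ x))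
    (hanal : ∀ ν ≤ p, ∀ θ : ℝ,
      AnalyticOn ℂ (fun u => iteratedDeriv ν (fun τ => fC τ u) θ) (Kset ι K (2*R)))
    (hbound : ∀ σ ∈ Set.Ioc (0:ℝ) 3, ∀ ν ≤ p, ∀ θ : ℝ, ∀ u ∈ Kset ι K (2*R),
      σ^ν / (Nat.factorial ν) * ‖iteratedDeriv ν (fun τ => fC τ u) θ‖ ≤ M)
    -- the regime of the theorem
    (ε₀ : ℝ) (hε₀ : ε₀ = R / (8*M))
    (n : ℕ) (hn : 1 ≤ n) (ε : ℝ) (hε : 0 < ε) (hnε : (n+1 : ℝ) * ε ≤ ε₀)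
    -- the constant 𝒬_p
    (Qp : ℝ) (hQp : Qp = 5 + 2^(p+1) * Real.exp (5/2) * (Nat.factorial p)) :
    -- δ^[n] is p times continuously differentiable w.r.t. θ
    (∀ u ∈ Kset ι K R, ContDiff ℝ p (fun θ => defect fC ε n θ u)) ∧
    -- ‖δ^[n]‖_{R,p} ≤ 2M (2 𝒬_p (n+1) ε/ε₀)^n
    (∀ ν ≤ p, ∀ θ : ℝ, ∀ u ∈ Kset ι K R,
        ‖iteratedDeriv ν (fun τ => defect fC ε n τ u) θ‖ ≤
          2*M * (2 * Qp * (n+1) * ε / ε₀)^n) := by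
  subst hε₀ hQp
  exact statement5_general hp hn hR hM hε hnε (fun _ => StroboscopicAveraging.ball_subset_Kset)
    (fun u _ => hperC u) (fun u _ => hcontdiffθ u) (fun ν hν θ => (hanal ν hν θ).differentiableOn)
    (hbound 3 (by norm_num))
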